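/- For all positive integers μ₁, μ₂, μ₃, the pruned simple Hurwitz number satisfies K_{0,3}(μ₁, μ₂, μ₃) = (μ₁+μ₂+μ₃+1)! · μ₁·μ₂·μ₃. -/

import Mathlib

/-- `σ` is a tuple of `m` transpositions in the symmetric group on `d` letters whose
ordered product is `T`, which generates a subgroup acting transitively, and such that
every point is moved by at least two of the transpositions.  These are the objects
counted by the pruned simple Hurwitz numbers. -/
def IsPrunedFactorisation {d m : ℕ} (T : Equiv.Perm (Fin d))
    (σ : Fin m → Equiv.Perm (Fin d)) : Prop :=
  (∀ i, (σ i).IsSwap) ∧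
  (List.ofFn σ).prod = T ∧
  (∀ x y : Fin d, ∃ g ∈ Subgroup.closure (Set.range σ), g x = y) ∧
  (∀ x : Fin d, 2 ≤ Nat.card {i : Fin m // σ i x ≠ x})

/-!
The `d + 1` transpositions of a pruned factorisation, where `d = μ₁ + μ₂ + μ₃`, are the edges of a
connected multigraph without leaves on `d` points, hence of a theta graph or of two loops which
share a point or are joined by a path. It can be traversed by a trail whose inner edges form a path
through all the points and whose first and last edges close up a loop each. The order of the
factors is a cyclic order of the edges at each point, and a traversal is called admissible unless
it turns to a given side at its end but not at its start. As the product has three cycles, the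
two loops do not cross, and in all three cases exactly `6` traversals are admissible.

Fix instead the order `w` in which a traversal uses the edges. The inner edges form a path through
all the points, hence their product is a `d`-cycle, so that the first and the last edge glue the
three cycles of the inverse product `M` to a single one, and `M` together with these two
transpositions determines all the vertices. The admissible gluings correspond to the triples of
points from the three cycles of `M`, of which there are `6 * (μ₁ * μ₂ * μ₃)`. Counting the
admissible traversals in both ways yields the theorem.
-/

namespace PrunedHurwitz

open Equiv Finset

/-! ### Traversals of pruned multigraphs -/

section Trails

variable {α ι : Type*} [DecidableEq α] {σ : ι → Perm α} {n N : ℕ} {w : ℕ → ι} {v : ℕ → α}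

/-- A family of transpositions `σ` is viewed as a multigraph with edge set `ι`, the edge `i`
joining the two points moved by `σ i`. A trail traverses the distinct edges `w 0, …, w (n - 1)`,
the edge `w j` leading from `v j` to `v (j + 1)`, and its vertices `v 1, …, v N` are distinct.
The values of `w` and `v` at larger indices are irrelevant. -/
structure IsTrail (σ : ι → Perm α) (n N : ℕ) (w : ℕ → ι) (v : ℕ → α) : Prop where
  step : ∀ j < n, σ (w j) = swap (v j) (v (j + 1))
  ne : ∀ j < n, v j ≠ v (j + 1)
  edge_inj : ∀ i < n, ∀ j < n, w i = w j → i = j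
  vertex_inj : ∀ i, 1 ≤ i → i ≤ N → ∀ j, 1 ≤ j → j ≤ N → v i = v j → i = j

/-- The multigraph of the transpositions `σ` is connected without leaves. -/
structure IsPruned [Fintype ι] (σ : ι → Perm α) : Prop where
  isSwap : ∀ i, (σ i).IsSwap
  connected : ∀ x y, ∃ g ∈ Subgroup.closure (Set.range σ), g x = y
  two_le_degree : ∀ x, 2 ≤ #{i | σ i x ≠ x}

theorem eq_swap_of_apply_ne {τ : Perm α} (hτ : τ.IsSwap) {x : α} (hx : τ x ≠ x) :
    τ = swap x (τ x) := by
  obtain ⟨a, b, -, rfl⟩ := hτ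
  obtain ⟨-, rfl | rfl⟩ := swap_apply_ne_self_iff.1 hx
  · rw [swap_apply_left]
  · rw [swap_apply_right, swap_comm]

namespace IsTrail

theorem moves_iff (h : IsTrail σ n N w v) {j : ℕ} (hj : j < n) (x : α) :
    σ (w j) x ≠ x ↔ x = v j ∨ x = v (j + 1) := by
  rw [h.step j hj, swap_apply_ne_self_iff, and_iff_right (h.ne j hj)]

theorem card_vertices (h : IsTrail σ n N w v) : #((Icc 1 N).image v) = N := by
  rw [card_image_of_injOn, Nat.card_Icc, Nat.add_sub_cancel]
  intro a ha b hb
  rw [coe_Icc] at ha hb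
  exact h.vertex_inj a ha.1 ha.2 b hb.1 hb.2

theorem card_edges [DecidableEq ι] (h : IsTrail σ n N w v) : #((range n).image w) = n := by
  rw [card_image_of_injOn, card_range]
  intro a ha b hb
  rw [coe_range] at ha hb
  exact h.edge_inj a ha b hb

theorem le_card [Fintype α] (h : IsTrail σ n N w v) : N ≤ Fintype.card α :=
  h.card_vertices.symm.trans_le (card_le_univ _)

theorem single {i : ι} {x : α} (hi : (σ i).IsSwap) (hx : σ i x ≠ x) :
    IsTrail σ 1 1 (fun _ => i) (fun j => if j = 0 then x else σ i x) where
  step j hj := by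
    obtain rfl : j = 0 := by omega
    exact eq_swap_of_apply_ne hi hx
  ne j hj := by
    obtain rfl : j = 0 := by omega
    exact hx.symm
  edge_inj := by omega
  vertex_inj := by omega

theorem snoc (h : IsTrail σ n n w v) {i : ι} (hi : (σ i).IsSwap)
    (hmoves : σ i (v n) ≠ v n) (hnew : ∀ j < n, w j ≠ i) :
    IsTrail σ (n + 1) n (Function.update w n i) (Function.update v (n + 1) (σ i (v n))) where
  step j hj := by
    obtain rfl | hjn := eq_or_ne j n
    · simpa using eq_swap_of_apply_ne hi hmoves
    · simpa [hjn, hj.ne] using h.step j (by omega)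
  ne j hj := by
    obtain rfl | hjn := eq_or_ne j n
    · simpa using hmoves.symm
    · simpa [hjn, hj.ne] using h.ne j (by omega)
  edge_inj a ha b hb hab := by
    obtain rfl | han := eq_or_ne a n <;> obtain rfl | hbn := eq_or_ne b a
    · rfl
    · rw [Function.update_self, Function.update_of_ne hbn] at hab
      exact absurd hab.symm (hnew b (by omega))
    · rfl
    · obtain rfl | hbn' := eq_or_ne b n
      · rw [Function.update_self, Function.update_of_ne han] at hab
        exact absurd hab (hnew a (by omega))
      · rw [Function.update_of_ne han, Function.update_of_ne hbn'] at hab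
        exact h.edge_inj a (by omega) b (by omega) hab
  vertex_inj a ha ha' b hb hb' hab := by
    rw [Function.update_of_ne (by omega), Function.update_of_ne (by omega)] at hab
    exact h.vertex_inj a ha ha' b hb hb' hab

theorem of_vertex_new (h : IsTrail σ n N w v) (hnew : ∀ j, 1 ≤ j → j ≤ N → v (N + 1) ≠ v j) :
    IsTrail σ n (N + 1) w v where
  step := h.step
  ne := h.ne
  edge_inj := h.edge_inj
  vertex_inj a ha ha' b hb hb' hab := by
    obtain rfl | haN := eq_or_ne a (N + 1) <;> obtain rfl | hbN := eq_or_ne b (N + 1)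
    · rfl
    · exact absurd hab (hnew b hb (by omega))
    · exact absurd hab.symm (hnew a ha (by omega))
    · exact h.vertex_inj a ha (by omega) b hb (by omega) hab

/-- Only the last edge, and the first one if the trail is closed, touch the end vertex. -/
theorem eq_last_or_closed (h : IsTrail σ n n w v) {j : ℕ} (hj : j < n)
    (hmoves : σ (w j) (v n) ≠ v n) : j = n - 1 ∨ j = 0 ∧ v 0 = v n := by
  rcases (h.moves_iff hj _).1 hmoves with hv | hv
  · rcases Nat.eq_zero_or_pos j with rfl | hpos
    · exact Or.inr ⟨rfl, hv.symm⟩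
    · have := h.vertex_inj n (by omega) le_rfl j hpos hj.le hv
      omega
  · have := h.vertex_inj n (by omega) le_rfl (j + 1) (by omega) (by omega) hv
    omega

variable [Fintype ι]

theorem exists_unused_of_open (h : IsTrail σ n n w v) (hdeg : 2 ≤ #{i | σ i (v n) ≠ v n})
    (hopen : v 0 ≠ v n) : ∃ i, σ i (v n) ≠ v n ∧ ∀ j < n, w j ≠ i := by
  classical
  obtain ⟨i, hi, hi'⟩ := exists_mem_notMem_of_card_lt_card
    (show #{w (n - 1)} < #{i | σ i (v n) ≠ v n} by rw [card_singleton]; omega)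
  refine ⟨i, (mem_filter.1 hi).2, ?_⟩
  rintro j hj rfl
  rcases h.eq_last_or_closed hj (mem_filter.1 hi).2 with rfl | ⟨-, hclosed⟩
  · exact hi' (mem_singleton_self _)
  · exact hopen hclosed

theorem exists_unused_of_closed (h : IsTrail σ n n w v) (hdeg : 3 ≤ #{i | σ i (v n) ≠ v n}) :
    ∃ i, σ i (v n) ≠ v n ∧ ∀ j < n, w j ≠ i := by
  classical
  obtain ⟨i, hi, hi'⟩ := exists_mem_notMem_of_card_lt_card
    (show #{w 0, w (n - 1)} < #{i | σ i (v n) ≠ v n} from card_le_two.trans_lt (by omega))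
  refine ⟨i, (mem_filter.1 hi).2, ?_⟩
  rintro j hj rfl
  rcases h.eq_last_or_closed hj (mem_filter.1 hi).2 with rfl | ⟨rfl, -⟩ <;> simp at hi'

end IsTrail

end Trails

section Existence

variable {α ι : Type*} [DecidableEq α] {σ : ι → Perm α} {n : ℕ} {w : ℕ → ι} {v : ℕ → α}

theorem exists_maximal_of_le {P : ℕ → Prop} {a b : ℕ} (ha : P a) (hb : ∀ n, P n → n ≤ b) :
    ∃ n, P n ∧ ¬ P (n + 1) := by
  classical
  refine ⟨Nat.findGreatest P b, Nat.findGreatest_spec (hb a ha) ha, fun hn => ?_⟩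
  exact absurd (Nat.le_findGreatest (hb _ hn) hn) (by omega)

theorem sum_degree [Fintype ι] (S : Finset α) :
    ∑ x ∈ S, #{i | σ i x ≠ x} = ∑ i, #{x ∈ S | σ i x ≠ x} := by
  simp only [card_filter]
  exact sum_comm

theorem card_moved_le_two {τ : Perm α} (hτ : τ.IsSwap) (S : Finset α) :
    #{x ∈ S | τ x ≠ x} ≤ 2 := by
  obtain ⟨a, b, -, rfl⟩ := hτ
  refine (card_le_card fun x hx => ?_).trans (card_le_two (a := a) (b := b))
  simpa using (swap_apply_ne_self_iff.1 (mem_filter.1 hx).2).2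

/-- A trail through `d` distinct vertices with `d + 1` edges whose two ends `v 0` and `v (d + 1)`
are attached to the path `v 1, …, v d` at `v k` and `v l`. If `d` is the number of all points and
`d + 1` the number of transpositions, it passes through the whole multigraph. -/
structure IsTraversal (σ : ι → Perm α) (d k l : ℕ) (w : ℕ → ι) (v : ℕ → α) : Prop
    extends IsTrail σ (d + 1) d w v where
  one_le_left : 1 ≤ k
  left_le : k ≤ d
  start : v 0 = v k
  one_le_right : 1 ≤ l
  right_le : l ≤ d
  finish : v (d + 1) = v l

/-- A trail that returns from `v k` to `v k` along its first `k` edges and can be continued from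
its last vertex along an unused edge. -/
structure IsLasso (σ : ι → Perm α) (n k : ℕ) (w : ℕ → ι) (v : ℕ → α) : Prop
    extends IsTrail σ n n w v where
  one_le : 1 ≤ k
  le : k ≤ n
  closed : v 0 = v k
  unused : ∃ i, σ i (v n) ≠ v n ∧ ∀ j < n, w j ≠ i

/-- The last edge `w (l - 1)` before the cycle serves as the unused edge at its base point. -/
theorem IsTrail.isLasso_tail (h : IsTrail σ (n + 1) n w v) {l : ℕ} (hl : 1 ≤ l) (hln : l ≤ n)
    (hv : v (n + 1) = v l) :
    IsLasso σ (n + 1 - l) (n + 1 - l) (fun j => w (l + j)) (fun j => v (l + j)) where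
  step j hj := h.step (l + j) (by omega)
  ne j hj := h.ne (l + j) (by omega)
  edge_inj a ha b hb hab := by
    have := h.edge_inj _ (by omega) _ (by omega) hab
    omega
  vertex_inj a ha ha' b hb hb' hab := by
    replace hab : v (l + a) = v (l + b) := hab
    obtain hal | hal : l + a = n + 1 ∨ l + a ≤ n := by omega
    all_goals obtain hbl | hbl : l + b = n + 1 ∨ l + b ≤ n := by omega
    · omega
    · rw [hal, hv] at hab
      have := h.vertex_inj l hl hln _ (by omega) hbl hab
      omega
    · rw [hbl, hv] at hab
      have := h.vertex_inj _ (by omega) hal l hl hln hab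
      omega
    · have := h.vertex_inj _ (by omega) hal _ (by omega) hbl hab
      omega
  one_le := by omega
  le := le_rfl
  closed := by simp only [Nat.add_zero, show l + (n + 1 - l) = n + 1 by omega, hv]
  unused := by
    refine ⟨w (l - 1), ?_, fun j hj hw => ?_⟩
    · simp only [show l + (n + 1 - l) = n + 1 by omega, hv]
      exact (h.moves_iff (by omega) _).2 (Or.inr (congrArg v (by omega)))
    · have := h.edge_inj _ (by omega) _ (by omega) hw
      omega

variable [Fintype α] [Fintype ι]

theorem exists_three_le_degree (hσ : ∀ i, (σ i).IsSwap)
    (hcard : Fintype.card α < Fintype.card ι) : ∃ x, 3 ≤ #{i | σ i x ≠ x} := by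
  by_contra! hdeg
  have hle : ∑ x, #{i | σ i x ≠ x} ≤ ∑ _x : α, 2 :=
    sum_le_sum fun x _ => by have := hdeg x; omega
  have hsupport : ∀ i, #{x | σ i x ≠ x} = 2 := fun i => Perm.card_support_eq_two.2 (hσ i)
  rw [sum_degree, sum_congr rfl fun i _ => hsupport i] at hle
  simp only [sum_const, card_univ, smul_eq_mul] at hle
  omega

theorem IsPruned.exists_isLasso (hσ : IsPruned σ) (hcard : Fintype.card α < Fintype.card ι) :
    ∃ n k w v, IsLasso σ n k w v := by
  classical
  obtain ⟨z, hz⟩ := exists_three_le_degree hσ.isSwap hcard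
  obtain ⟨i, hi⟩ : ∃ i, σ i z ≠ z := by
    obtain ⟨i, hi⟩ := card_pos.1 (show 0 < #{i | σ i z ≠ z} by omega)
    exact ⟨i, (mem_filter.1 hi).2⟩
  obtain ⟨n, ⟨w, v, h, hn, rfl⟩, hmax⟩ := exists_maximal_of_le
    (P := fun n => ∃ w v, IsTrail σ n n w v ∧ 1 ≤ n ∧ v 0 = z)
    ⟨_, _, IsTrail.single (hσ.isSwap i) hi, le_rfl, rfl⟩ (fun _ ⟨_, _, h, _⟩ => h.le_card)
  by_cases hclosed : v 0 = v n
  · exact ⟨n, n, w, v, h, hn, le_rfl, hclosed, h.exists_unused_of_closed (hclosed ▸ hz)⟩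
  obtain ⟨i, hi, hi'⟩ := h.exists_unused_of_open (hσ.two_le_degree _) hclosed
  have h' := h.snoc (hσ.isSwap i) hi hi'
  by_cases hnew : ∀ j, 1 ≤ j → j ≤ n → Function.update v (n + 1) (σ i (v n)) (n + 1) ≠
      Function.update v (n + 1) (σ i (v n)) j
  · exact absurd ⟨_, _, h'.of_vertex_new hnew, by omega, by simp⟩ hmax
  · push Not at hnew
    obtain ⟨l, hl, hln, hv⟩ := hnew
    exact ⟨_, _, _, _, h'.isLasso_tail hl hln hv⟩

open scoped Pointwise in
theorem IsPruned.eq_univ (hσ : IsPruned σ) {S : Finset α} (hS : S.Nonempty)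
    (hmaps : ∀ i, ∀ x ∈ S, σ i x ∈ S) : S = univ := by
  have hle : Subgroup.closure (Set.range σ) ≤ MulAction.stabilizer (Perm α) S := by
    rw [Subgroup.closure_le]
    rintro _ ⟨i, rfl⟩
    exact MulAction.mem_stabilizer_finset'.2 fun x hx => hmaps i x hx
  obtain ⟨x, hx⟩ := hS
  refine eq_univ_iff_forall.2 fun y => ?_
  obtain ⟨g, hg, rfl⟩ := hσ.connected x y
  exact MulAction.mem_stabilizer_finset'.1 (hle hg) hx

/-- The edges outside `U` are too few to provide two edge ends at each vertex outside `S` and an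
edge leaving `S` as well. -/
theorem IsPruned.mapsTo_of_card_compl_le [DecidableEq ι] (hσ : IsPruned σ) {S : Finset α}
    {U : Finset ι} (hU : ∀ i ∈ U, ∀ x, σ i x ≠ x → x ∈ S) (hcard : #Uᶜ ≤ #Sᶜ) :
    ∀ i, ∀ x ∈ S, σ i x ∈ S := by
  by_contra! hleave
  obtain ⟨i, x, hx, hix⟩ := hleave
  have hmoves : σ i x ≠ x := fun h => hix (by rwa [h])
  have hiU : i ∉ U := fun hi => hix (hU i hi (σ i x) fun h => hmoves ((σ i).injective h))
  have hinner : ∀ j ∈ U, #{y ∈ Sᶜ | σ j y ≠ y} = 0 := fun j hj =>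
    card_eq_zero.2 (filter_eq_empty_iff.2 fun y hy hy' => mem_compl.1 hy (hU j hj y hy'))
  have hleaving : #{y ∈ Sᶜ | σ i y ≠ y} < 2 := by
    rw [← Perm.card_support_eq_two.2 (hσ.isSwap i)]
    refine card_lt_card ⟨fun y hy => Perm.mem_support.2 (mem_filter.1 hy).2, fun hsub => ?_⟩
    exact mem_compl.1 (mem_filter.1 (hsub (Perm.mem_support.2 hmoves))).1 hx
  have hlt : ∑ j, #{y ∈ Sᶜ | σ j y ≠ y} < ∑ j, if j ∈ U then 0 else 2 := by
    refine sum_lt_sum (fun j _ => ?_) ⟨i, mem_univ i, by rwa [if_neg hiU]⟩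
    split_ifs with hj
    · exact (hinner j hj).le
    · exact card_moved_le_two (hσ.isSwap j) _
  have hle : ∑ _y ∈ Sᶜ, 2 ≤ ∑ y ∈ Sᶜ, #{j | σ j y ≠ y} :=
    sum_le_sum fun y _ => hσ.two_le_degree y
  rw [sum_degree] at hle
  have hUc : ∑ j, (if j ∈ U then 0 else 2) = #Uᶜ * 2 := by
    rw [sum_ite, sum_const_zero, zero_add, sum_const, smul_eq_mul, filter_not, filter_mem_eq_inter,
      univ_inter, compl_eq_univ_sdiff]
  rw [sum_const, smul_eq_mul] at hle
  omega

theorem IsPruned.card_eq_of_isTrail (hσ : IsPruned σ)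
    (hcard : Fintype.card ι = Fintype.card α + 1) (h : IsTrail σ (n + 1) n w v) {k l : ℕ}
    (hk : 1 ≤ k) (hkn : k ≤ n) (hv₀ : v 0 = v k) (hl : 1 ≤ l) (hln : l ≤ n)
    (hv₁ : v (n + 1) = v l) : n = Fintype.card α := by
  classical
  have hmem : ∀ j ≤ n + 1, v j ∈ (Icc 1 n).image v := by
    intro j hj
    obtain rfl | rfl | hj' : j = 0 ∨ j = n + 1 ∨ (1 ≤ j ∧ j ≤ n) := by omega
    · exact mem_image.2 ⟨k, mem_Icc.2 ⟨hk, hkn⟩, hv₀.symm⟩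
    · exact mem_image.2 ⟨l, mem_Icc.2 ⟨hl, hln⟩, hv₁.symm⟩
    · exact mem_image_of_mem v (mem_Icc.2 hj')
  have hmaps := hσ.mapsTo_of_card_compl_le (S := (Icc 1 n).image v) (U := (range (n + 1)).image w)
    (by
      intro i hi x hx
      obtain ⟨j, hj, rfl⟩ := mem_image.1 hi
      rw [mem_range] at hj
      obtain rfl | rfl := (h.moves_iff hj x).1 hx <;> exact hmem _ (by omega))
    (by rw [card_compl, card_compl, h.card_edges, h.card_vertices]; omega)
  rw [← h.card_vertices, hσ.eq_univ ⟨_, hmem 0 (by omega)⟩ hmaps, card_univ]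

theorem IsLasso.exists_traversal (hσ : IsPruned σ)
    (hcard : Fintype.card ι = Fintype.card α + 1) {k : ℕ} (h : IsLasso σ n k w v)
    (hmax : ¬ ∃ k w v, IsLasso σ (n + 1) k w v) :
    ∃ k l w v, IsTraversal σ (Fintype.card α) k l w v := by
  obtain ⟨i, hi, hi'⟩ := h.unused
  have h' := h.snoc (hσ.isSwap i) hi hi'
  set v' := Function.update v (n + 1) (σ i (v n))
  have hv'_le : ∀ j ≤ n, v' j = v j := fun j hj => Function.update_of_ne (by omega) _ _
  have hclosed : v' 0 = v' k := by rw [hv'_le 0 (by omega), hv'_le k h.le, h.closed]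
  by_cases hnew : ∀ j, 1 ≤ j → j ≤ n → v' (n + 1) ≠ v' j
  · have h'' := h'.of_vertex_new hnew
    refine absurd ⟨k, _, _, h'', h.one_le, h.le.trans n.le_succ, hclosed, ?_⟩ hmax
    refine h''.exists_unused_of_open (hσ.two_le_degree _) ?_
    exact hclosed ▸ (hnew k h.one_le h.le).symm
  · push Not at hnew
    obtain ⟨l, hl, hln, hv⟩ := hnew
    have hn := hσ.card_eq_of_isTrail hcard h' h.one_le h.le hclosed hl hln hv
    exact ⟨k, l, _, v', hn ▸ h', h.one_le, hn ▸ h.le, hclosed, hl, hn ▸ hln, hn ▸ hv⟩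

theorem IsPruned.exists_traversal (hσ : IsPruned σ)
    (hcard : Fintype.card ι = Fintype.card α + 1) :
    ∃ k l w v, IsTraversal σ (Fintype.card α) k l w v := by
  obtain ⟨n₀, h₀⟩ := hσ.exists_isLasso (by omega)
  obtain ⟨n, ⟨k, w, v, h⟩, hmax⟩ := exists_maximal_of_le
    (P := fun n => ∃ k w v, IsLasso σ n k w v) h₀ (fun _ ⟨_, _, _, h⟩ => h.le_card)
  exact h.exists_traversal hσ hcard hmax

end Existence

section Symmetries

variable {α ι : Type*} {σ : ι → Perm α} {d k l : ℕ} {w w' : ℕ → ι} {v v' : ℕ → α}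

/-- The edges of a traversal read backwards. -/
def revEdges (d : ℕ) (w : ℕ → ι) (j : ℕ) : ι := w (d - j)

/-- The vertices of a traversal read backwards. -/
def revVertices (d : ℕ) (v : ℕ → α) (j : ℕ) : α := v (d + 1 - j)

/-- The edges of a traversal whose final loop, based at `v l`, is run through backwards. -/
def flipEdges (d l : ℕ) (w : ℕ → ι) (j : ℕ) : ι := if j < l then w j else w (d + l - j)

/-- The vertices of a traversal whose final loop, based at `v l`, is run through backwards. -/
def flipVertices (d l : ℕ) (v : ℕ → α) (j : ℕ) : α := if j ≤ l then v j else v (d + 1 + l - j)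

theorem flipEdges_of_lt {j : ℕ} (hj : j < l) : flipEdges d l w j = w j := if_pos hj

theorem flipEdges_of_le {j : ℕ} (hj : l ≤ j) : flipEdges d l w j = w (d + l - j) :=
  if_neg hj.not_gt

theorem flipVertices_of_le {j : ℕ} (hj : j ≤ l) : flipVertices d l v j = v j := if_pos hj

theorem flipVertices_of_lt {j : ℕ} (hj : l < j) : flipVertices d l v j = v (d + 1 + l - j) :=
  if_neg hj.not_ge

variable [DecidableEq α]

theorem IsTrail.rev (h : IsTrail σ (d + 1) d w v) :
    IsTrail σ (d + 1) d (revEdges d w) (revVertices d v) where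
  step j hj := by
    rw [revEdges, h.step _ (by omega), swap_comm, revVertices, revVertices,
      show d + 1 - j = d - j + 1 by omega, Nat.add_sub_add_right]
  ne j hj := by
    rw [revVertices, revVertices, show d + 1 - j = d - j + 1 by omega, Nat.add_sub_add_right]
    exact (h.ne (d - j) (by omega)).symm
  edge_inj a ha b hb hab := by
    have := h.edge_inj _ (by omega) _ (by omega) hab
    omega
  vertex_inj a ha ha' b hb hb' hab := by
    have := h.vertex_inj _ (by omega) (by omega) _ (by omega) (by omega) hab
    omega

theorem IsTrail.flip (h : IsTrail σ (d + 1) d w v) (hv : v (d + 1) = v l) :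
    IsTrail σ (d + 1) d (flipEdges d l w) (flipVertices d l v) where
  step j hj := by
    rcases lt_trichotomy j l with hjl | rfl | hjl
    · rw [flipEdges_of_lt hjl, flipVertices_of_le hjl.le, flipVertices_of_le hjl, h.step _ hj]
    · rw [flipEdges_of_le le_rfl, flipVertices_of_le le_rfl, flipVertices_of_lt j.lt_succ_self,
        Nat.add_sub_cancel, h.step d d.lt_succ_self, hv, swap_comm,
        show d + 1 + j - (j + 1) = d by omega]
    · rw [flipEdges_of_le hjl.le, flipVertices_of_lt hjl, flipVertices_of_lt (by omega),
        h.step _ (by omega), swap_comm, show d + 1 + l - (j + 1) = d + l - j by omega,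
        show d + 1 + l - j = d + l - j + 1 by omega]
  ne j hj := by
    rcases lt_trichotomy j l with hjl | rfl | hjl
    · rw [flipVertices_of_le hjl.le, flipVertices_of_le hjl]
      exact h.ne j hj
    · rw [flipVertices_of_le le_rfl, flipVertices_of_lt j.lt_succ_self, ← hv,
        show d + 1 + j - (j + 1) = d by omega]
      exact (h.ne d d.lt_succ_self).symm
    · rw [flipVertices_of_lt hjl, flipVertices_of_lt (by omega),
        show d + 1 + l - (j + 1) = d + l - j by omega,
        show d + 1 + l - j = d + l - j + 1 by omega]
      exact (h.ne _ (by omega)).symm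
  edge_inj a ha b hb hab := by
    simp only [flipEdges] at hab
    split_ifs at hab <;> have := h.edge_inj _ (by omega) _ (by omega) hab <;> omega
  vertex_inj a ha ha' b hb hb' hab := by
    simp only [flipVertices] at hab
    split_ifs at hab <;>
      have := h.vertex_inj _ (by omega) (by omega) _ (by omega) (by omega) hab <;> omega

namespace IsTraversal

theorem rev (h : IsTraversal σ d k l w v) :
    IsTraversal σ d (d + 1 - l) (d + 1 - k) (revEdges d w) (revVertices d v) where
  toIsTrail := h.toIsTrail.rev
  one_le_left := by have := h.right_le; omega
  left_le := by have := h.one_le_right; omega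
  start := by
    have := h.right_le
    rw [revVertices, revVertices, Nat.sub_zero, h.finish, Nat.sub_sub_self (by omega)]
  one_le_right := by have := h.left_le; omega
  right_le := by have := h.one_le_left; omega
  finish := by
    have := h.left_le
    rw [revVertices, revVertices, Nat.sub_self, h.start, Nat.sub_sub_self (by omega)]

theorem flip_of_le (h : IsTraversal σ d k l w v) (hkl : k ≤ l) :
    IsTraversal σ d k l (flipEdges d l w) (flipVertices d l v) where
  toIsTrail := h.toIsTrail.flip h.finish
  one_le_left := h.one_le_left
  left_le := h.left_le
  start := by rw [flipVertices_of_le (Nat.zero_le l), flipVertices_of_le hkl, h.start]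
  one_le_right := h.one_le_right
  right_le := h.right_le
  finish := by
    rw [flipVertices_of_lt (Nat.lt_succ_of_le h.right_le), flipVertices_of_le le_rfl,
      Nat.add_sub_cancel_left]

theorem flip_of_lt (h : IsTraversal σ d k l w v) (hlk : l < k) :
    IsTraversal σ d (d + 1 + l - k) l (flipEdges d l w) (flipVertices d l v) where
  toIsTrail := h.toIsTrail.flip h.finish
  one_le_left := by have := h.left_le; omega
  left_le := by omega
  start := by
    have := h.left_le
    rw [flipVertices_of_le (Nat.zero_le l), flipVertices_of_lt (by omega), h.start,
      Nat.sub_sub_self (by omega)]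
  one_le_right := h.one_le_right
  right_le := h.right_le
  finish := by
    rw [flipVertices_of_lt (Nat.lt_succ_of_le h.right_le), flipVertices_of_le le_rfl,
      Nat.add_sub_cancel_left]

theorem exists_flip (h : IsTraversal σ d k l w v) :
    ∃ k', IsTraversal σ d k' l (flipEdges d l w) (flipVertices d l v) :=
  (le_or_gt k l).elim (fun hkl => ⟨_, h.flip_of_le hkl⟩) fun hlk => ⟨_, h.flip_of_lt hlk⟩

theorem congr (h : IsTraversal σ d k l w v) (hw : ∀ j ≤ d, w' j = w j)
    (hv : ∀ j ≤ d + 1, v' j = v j) : IsTraversal σ d k l w' v' where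
  step j hj := by rw [hw j (by omega), hv j hj.le, hv (j + 1) hj, h.step j hj]
  ne j hj := by rw [hv j hj.le, hv (j + 1) hj]; exact h.ne j hj
  edge_inj a ha b hb hab := h.edge_inj a ha b hb (by rwa [← hw a (by omega), ← hw b (by omega)])
  vertex_inj a ha ha' b hb hb' hab :=
    h.vertex_inj a ha ha' b hb hb' (by rwa [← hv a (by omega), ← hv b (by omega)])
  one_le_left := h.one_le_left
  left_le := h.left_le
  start := by rw [hv 0 (by omega), hv k (h.left_le.trans d.le_succ), h.start]
  one_le_right := h.one_le_right
  right_le := h.right_le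
  finish := by rw [hv _ le_rfl, hv l (h.right_le.trans d.le_succ), h.finish]

theorem two_le_left (h : IsTraversal σ d k l w v) : 2 ≤ k := by
  have := h.one_le_left
  have : k ≠ 1 := by
    rintro rfl
    exact h.ne 0 (by omega) h.start
  omega

theorem right_lt (h : IsTraversal σ d k l w v) : l < d := by
  refine lt_of_le_of_ne h.right_le ?_
  rintro rfl
  exact h.ne l (by omega) h.finish.symm

theorem left_unique {k' l' : ℕ} (h : IsTraversal σ d k l w v)
    (h' : IsTraversal σ d k' l' w' v) : k = k' :=
  h.vertex_inj k h.one_le_left h.left_le k' h'.one_le_left h'.left_le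
    (h.start.symm.trans h'.start)

theorem right_unique {k' l' : ℕ} (h : IsTraversal σ d k l w v)
    (h' : IsTraversal σ d k' l' w' v) : l = l' :=
  h.vertex_inj l h.one_le_right h.right_le l' h'.one_le_right h'.right_le
    (h.finish.symm.trans h'.finish)

theorem next (h : IsTraversal σ d k l w v) {j : ℕ} (hj : j ≤ d) : v (j + 1) = σ (w j) (v j) := by
  rw [h.step j (by omega), swap_apply_left]

theorem moves (h : IsTraversal σ d k l w v) {j : ℕ} (hj : j ≤ d) : σ (w j) (v j) ≠ v j :=
  (h.moves_iff (by omega) _).2 (Or.inl rfl)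

theorem moves_succ (h : IsTraversal σ d k l w v) {j : ℕ} (hj : j ≤ d) :
    σ (w j) (v (j + 1)) ≠ v (j + 1) :=
  (h.moves_iff (by omega) _).2 (Or.inr rfl)

theorem eq_of_moves (h : IsTraversal σ d k l w v) {i j : ℕ} (hi : i ≤ d) (hj : 1 ≤ j) (hjd : j ≤ d)
    (hmoves : σ (w i) (v j) ≠ v j) :
    i = j - 1 ∨ i = j ∨ (i = 0 ∧ j = k) ∨ (i = d ∧ j = l) := by
  have hvj := h.vertex_inj j hj hjd
  rcases (h.moves_iff (by omega) _).1 hmoves with hv | hv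
  · rcases Nat.eq_zero_or_pos i with rfl | hi₀
    · exact .inr (.inr (.inl ⟨rfl, hvj k h.one_le_left h.left_le (hv.trans h.start)⟩))
    · exact .inr (.inl (hvj i hi₀ hi hv).symm)
  · obtain rfl | hid := eq_or_ne i d
    · exact .inr (.inr (.inr ⟨rfl, hvj l h.one_le_right h.right_le (hv.trans h.finish)⟩))
    · have := hvj (i + 1) (by omega) (by omega) hv
      omega

theorem exists_edge [Fintype ι] (h : IsTraversal σ d k l w v) (hι : Fintype.card ι = d + 1)
    (i : ι) : ∃ j ≤ d, w j = i := by
  classical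
  have huniv : (range (d + 1)).image w = univ :=
    eq_univ_of_card _ (h.card_edges.trans hι.symm)
  obtain ⟨j, hj, hji⟩ := mem_image.1 (huniv ▸ mem_univ i)
  exact ⟨j, by rw [mem_range] at hj; omega, hji⟩

end IsTraversal

end Symmetries

section Uniqueness

variable {α ι : Type*} [DecidableEq α] {σ : ι → Perm α} {d k l k' l' : ℕ} {w w' : ℕ → ι}
  {v v' : ℕ → α}

namespace IsTraversal

theorem vertices_eq_of_edges_eq (h : IsTraversal σ d k l w v) (h' : IsTraversal σ d k' l' w' v')
    (hv₀ : v' 0 = v 0) {n : ℕ} (hn : n ≤ d + 1) (hw : ∀ i < n, w' i = w i) :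
    ∀ i ≤ n, v' i = v i := by
  intro i
  induction i with
  | zero => exact fun _ => hv₀
  | succ i ih =>
    intro hi
    rw [h.next (by omega), h'.next (by omega), hw i (by omega), ih (by omega)]

variable [Fintype ι]

/-- Away from its ends a traversal has no choice: the only vertex where it meets two unused edges
is `v l`. -/
theorem next_edge (h : IsTraversal σ d k l w v) (h' : IsTraversal σ d k' l' w' v')
    (hι : Fintype.card ι = d + 1) (hv₀ : v' 0 = v 0) (hw₀ : w' 0 = w 0) {j : ℕ} (hj : j ≤ d)
    (hw : ∀ i < j, w' i = w i) : w' j = w j ∨ (j = l ∧ w' j = w d) := by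
  rcases Nat.eq_zero_or_pos j with rfl | hj₀
  · exact Or.inl hw₀
  have hvj := vertices_eq_of_edges_eq h h' hv₀ (by omega) hw j le_rfl
  obtain ⟨i, hi, hwi⟩ := h.exists_edge hι (w' j)
  have hji : j ≤ i := by
    by_contra! hij
    have := h'.edge_inj i (by omega) j (by omega) ((hw i hij).trans hwi)
    omega
  have hmoves : σ (w i) (v j) ≠ v j := by
    rw [hwi, ← hvj]
    exact h'.moves hj
  rcases h.eq_of_moves hi hj₀ hj hmoves with hij | rfl | hij | ⟨rfl, hjl⟩
  · omega
  · exact Or.inl hwi.symm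
  · omega
  · exact Or.inr ⟨hjl, hwi.symm⟩

theorem eq_of_edge_eq (h : IsTraversal σ d k l w v) (h' : IsTraversal σ d k' l' w' v')
    (hι : Fintype.card ι = d + 1) (hv₀ : v' 0 = v 0) (hw₀ : w' 0 = w 0) (hwl : w' l = w l) :
    (∀ j ≤ d, w' j = w j) ∧ ∀ j ≤ d + 1, v' j = v j := by
  have hw : ∀ j ≤ d, w' j = w j := by
    intro j
    induction j using Nat.strong_induction_on with
    | _ j ih =>
      intro hj
      rcases h.next_edge h' hι hv₀ hw₀ hj fun i hi => ih i hi (by omega) with hwj | ⟨rfl, -⟩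
      exacts [hwj, hwl]
  exact ⟨hw, h.vertices_eq_of_edges_eq h' hv₀ le_rfl fun i hi => hw i (by omega)⟩

theorem eq_or_eq_flip (h : IsTraversal σ d k l w v) (h' : IsTraversal σ d k' l' w' v')
    (hι : Fintype.card ι = d + 1) (hv₀ : v' 0 = v 0) (hw₀ : w' 0 = w 0) :
    ((∀ j ≤ d, w' j = w j) ∧ ∀ j ≤ d + 1, v' j = v j) ∨
      ((∀ j ≤ d, w' j = flipEdges d l w j) ∧ ∀ j ≤ d + 1, v' j = flipVertices d l v j) := by
  have hl := h.one_le_right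
  have hld := h.right_le
  have hw : ∀ j < l, w' j = w j := by
    intro j
    induction j using Nat.strong_induction_on with
    | _ j ih =>
      intro hj
      rcases h.next_edge h' hι hv₀ hw₀ (by omega) fun i hi => ih i hi (by omega) with hwj | ⟨rfl, -⟩
      · exact hwj
      · omega
  rcases h.next_edge h' hι hv₀ hw₀ hld hw with hwl | ⟨-, hwl⟩
  · exact Or.inl (h.eq_of_edge_eq h' hι hv₀ hw₀ hwl)
  · obtain ⟨k'', hflip⟩ := h.exists_flip
    refine Or.inr (hflip.eq_of_edge_eq h' hι ?_ ?_ ?_)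
    · rw [hv₀, flipVertices_of_le (Nat.zero_le l)]
    · rw [hw₀, flipEdges_of_lt hl]
    · rw [hwl, flipEdges_of_le le_rfl, Nat.add_sub_cancel]

end IsTraversal

end Uniqueness

section FirstEdges

variable {α ι : Type*} [DecidableEq α] {σ : ι → Perm α} {d k l : ℕ} {w : ℕ → ι} {v : ℕ → α}

namespace IsTraversal

theorem edge_ne (h : IsTraversal σ d k l w v) {i j : ℕ} (hi : i ≤ d) (hj : j ≤ d) (hij : i ≠ j) :
    w i ≠ w j :=
  fun hw => hij (h.edge_inj i (by omega) j (by omega) hw)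

theorem moves_start (h : IsTraversal σ d k l w v) {j : ℕ} (hj : j = 0 ∨ j = k - 1 ∨ j = k) :
    σ (w j) (v k) ≠ v k := by
  have hk := h.one_le_left
  have hkd := h.left_le
  rcases hj with rfl | rfl | rfl
  · rw [← h.start]
    exact h.moves d.zero_le
  · have := h.moves_succ (j := k - 1) (by omega)
    rwa [Nat.sub_add_cancel hk] at this
  · exact h.moves hkd

theorem card_start_edges [DecidableEq ι] (h : IsTraversal σ d k l w v) :
    #{w 0, w (k - 1), w k} = 3 := by
  have hk := h.two_le_left
  have hkd := h.left_le
  exact card_eq_three.2 ⟨_, _, _, h.edge_ne (by omega) (by omega) (by omega),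
    h.edge_ne (by omega) (by omega) (by omega), h.edge_ne (by omega) (by omega) (by omega), rfl⟩

theorem exists_bridge_side (h : IsTraversal σ d k l w v) (hkl : k < l) :
    ∃ S : Set α, v k ∉ S ∧ v (k + 1) ∈ S ∧ ∀ i ≤ d, i ≠ k → (v i ∈ S ↔ v (i + 1) ∈ S) := by
  have hld := h.right_le
  have hk := h.one_le_left
  let S : Set α := {x | ∃ j, k < j ∧ j ≤ d ∧ v j = x}
  have hS : ∀ j, 1 ≤ j → j ≤ d → (v j ∈ S ↔ k < j) := by
    refine fun j hj hjd => ⟨?_, fun hkj => ⟨j, hkj, hjd, rfl⟩⟩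
    rintro ⟨i, hki, hid, hij⟩
    rwa [← h.vertex_inj i (by omega) hid j hj hjd hij]
  refine ⟨S, ?_, (hS _ (by omega) (by omega)).2 k.lt_succ_self, fun i hid hik => ?_⟩
  · rw [hS k hk (by omega)]
    exact lt_irrefl k
  obtain rfl | hi₀ := Nat.eq_zero_or_pos i
  · rw [h.start, hS k hk (by omega), hS (0 + 1) (by omega) (by omega)]
    omega
  obtain rfl | hid' := eq_or_ne i d
  · rw [h.finish, hS i hi₀ hid, hS l (by omega) hld]
    omega
  · rw [hS i hi₀ hid, hS (i + 1) (by omega) (by omega)]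
    omega

end IsTraversal

open Classical in
/-- The edges with which the traversals starting at `x` can begin. -/
noncomputable def firstEdges [Fintype ι] (σ : ι → Perm α) (d : ℕ) (x : α) : Finset ι :=
  {i | ∃ k l w v, IsTraversal σ d k l w v ∧ w 0 = i ∧ v 0 = x}

variable [Fintype ι]

theorem mem_firstEdges {i : ι} {x : α} :
    i ∈ firstEdges σ d x ↔ ∃ k l w v, IsTraversal σ d k l w v ∧ w 0 = i ∧ v 0 = x := by
  simp only [firstEdges, mem_filter_univ]

namespace IsTraversal

theorem edge_zero_mem (h : IsTraversal σ d k l w v) : w 0 ∈ firstEdges σ d (v k) :=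
  mem_firstEdges.2 ⟨k, l, w, v, h, rfl, h.start⟩

theorem edge_last_mem (h : IsTraversal σ d k l w v) : w d ∈ firstEdges σ d (v l) := by
  rw [← h.finish]
  exact mem_firstEdges.2 ⟨_, _, _, _, h.rev, rfl, rfl⟩

theorem edge_right_mem (h : IsTraversal σ d k l w v) : w l ∈ firstEdges σ d (v l) := by
  obtain ⟨k', hflip⟩ := h.exists_flip
  have := hflip.edge_last_mem
  rwa [flipEdges_of_le h.right_le, flipVertices_of_le le_rfl, Nat.add_sub_cancel_left] at this

theorem edge_left_sub_mem (h : IsTraversal σ d k l w v) : w (k - 1) ∈ firstEdges σ d (v k) := by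
  have := h.rev.edge_right_mem
  have hk := h.one_le_left
  have hkd := h.left_le
  rwa [revEdges, revVertices, Nat.sub_sub_self (by omega),
    show d - (d + 1 - k) = k - 1 by omega] at this

theorem edge_left_mem_of_lt (h : IsTraversal σ d k l w v) (hlk : l < k) :
    w k ∈ firstEdges σ d (v k) := by
  have := (h.flip_of_lt hlk).edge_left_sub_mem
  have hkd := h.left_le
  rwa [flipEdges_of_le (by omega), flipVertices_of_lt (by omega),
    show d + l - (d + 1 + l - k - 1) = k by omega,
    show d + 1 + l - (d + 1 + l - k) = k by omega] at this

/-- A traversal starting at `x` uses three edges at `x`. -/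
theorem start_eq_or_eq (h : IsTraversal σ d k l w v) (hι : Fintype.card ι = d + 1) {i : ι} {x : α}
    (hi : i ∈ firstEdges σ d x) : x = v k ∨ x = v l := by
  classical
  obtain ⟨k', l', w', v', h', rfl, rfl⟩ := mem_firstEdges.1 hi
  obtain ⟨a, ha, hwa⟩ := h.exists_edge hι (w' 0)
  have hmoves := h'.moves d.zero_le
  rw [← hwa] at hmoves
  rw [h'.start] at hmoves ⊢
  by_contra! hne
  obtain ⟨j, hj, hjd, hvj⟩ : ∃ j, 1 ≤ j ∧ j ≤ d ∧ v' k' = v j := by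
    rcases (h.moves_iff (by omega) _).1 hmoves with hv | hv
    · rcases Nat.eq_zero_or_pos a with rfl | ha₀
      · exact absurd (hv.trans h.start) hne.1
      · exact ⟨a, ha₀, ha, hv⟩
    · obtain rfl | had := eq_or_ne a d
      · exact absurd (hv.trans h.finish) hne.2
      · exact ⟨a + 1, by omega, by omega, hv⟩
  have hmem : ∀ b, b = 0 ∨ b = k' - 1 ∨ b = k' → w' b ∈ ({w (j - 1), w j} : Finset ι) := by
    intro b hb
    obtain ⟨c, hc, hwc⟩ := h.exists_edge hι (w' b)
    have hmoves := h'.moves_start hb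
    rw [← hwc, hvj] at hmoves
    rcases h.eq_of_moves hc hj hjd hmoves with rfl | rfl | ⟨-, rfl⟩ | ⟨-, rfl⟩
    · simp [hwc]
    · simp [hwc]
    · exact absurd hvj hne.1
    · exact absurd hvj hne.2
  have hsub : {w' 0, w' (k' - 1), w' k'} ⊆ ({w (j - 1), w j} : Finset ι) := by
    simp only [insert_subset_iff, singleton_subset_iff]
    exact ⟨hmem _ (by simp), hmem _ (by simp), hmem _ (by simp)⟩
  have := card_le_card hsub
  rw [h'.card_start_edges] at this
  have := card_le_two (a := w (j - 1)) (b := w j)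
  omega

theorem exists_index_of_mem_firstEdges (h : IsTraversal σ d k l w v)
    (hι : Fintype.card ι = d + 1) {i : ι} (hi : i ∈ firstEdges σ d (v k)) :
    i = w (k - 1) ∨ i = w k ∨ i = w 0 ∨ i = w d ∧ k = l := by
  obtain ⟨a, ha, rfl⟩ := h.exists_edge hι i
  have hmoves : σ (w a) (v k) ≠ v k := by
    obtain ⟨_, _, _, _, h', hw₀, hv₀⟩ := mem_firstEdges.1 hi
    rw [← hw₀, ← hv₀]
    exact h'.moves d.zero_le
  rcases h.eq_of_moves ha h.one_le_left h.left_le hmoves with rfl | rfl | ⟨rfl, -⟩ | ⟨rfl, hkl⟩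
  exacts [.inl rfl, .inr (.inl rfl), .inr (.inr (.inl rfl)), .inr (.inr (.inr ⟨rfl, hkl⟩))]

theorem card_firstEdges_left_of_gt (h : IsTraversal σ d k l w v) (hι : Fintype.card ι = d + 1)
    (hlk : l < k) : #(firstEdges σ d (v k)) = 3 := by
  classical
  rw [← h.card_start_edges]
  congr 1
  ext i
  simp only [mem_insert, mem_singleton]
  refine ⟨fun hi => ?_, ?_⟩
  · rcases h.exists_index_of_mem_firstEdges hι hi with hi | hi | hi | ⟨-, hkl⟩
    exacts [.inr (.inl hi), .inr (.inr hi), .inl hi, absurd hkl hlk.ne']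
  · rintro (rfl | rfl | rfl)
    exacts [h.edge_zero_mem, h.edge_left_sub_mem, h.edge_left_mem_of_lt hlk]

/-- Beyond `v k`, with `k < l`, the bridge `w k` is the only way back to `v k`. -/
theorem edge_left_notMem_of_lt (h : IsTraversal σ d k l w v) (hι : Fintype.card ι = d + 1)
    (hkl : k < l) : w k ∉ firstEdges σ d (v k) := by
  rw [mem_firstEdges]
  rintro ⟨k', l', w', v', h', hw₀, hv₀⟩
  have hkd := h.left_le
  obtain ⟨S, hvk, hvk', hcross⟩ := h.exists_bridge_side hkl
  have hstay : ∀ j, 1 ≤ j → j ≤ k' → v' j ∈ S := by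
    intro j hj
    have hk'd := h'.left_le
    induction j, hj using Nat.le_induction with
    | base =>
      intro _
      rwa [h'.next d.zero_le, hw₀, hv₀, ← h.next hkd]
    | succ j hj ih =>
      intro hjk'
      have hvj := ih (by omega)
      obtain ⟨i, hid, hwi⟩ := h.exists_edge hι (w' j)
      have hik : i ≠ k := by
        rintro rfl
        have := h'.edge_inj j (by omega) 0 (by omega) (hwi.symm.trans hw₀.symm)
        omega
      have hmoves := h'.moves (j := j) (by omega)
      rw [h'.next (by omega)]
      rw [← hwi] at hmoves ⊢
      rcases (h.moves_iff (by omega) _).1 hmoves with hvi | hvi <;> rw [hvi] at hvj ⊢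
      · rwa [← h.next hid, ← hcross i hid hik]
      · rwa [h.step i (by omega), swap_apply_right, hcross i hid hik]
  have := hstay k' h'.one_le_left le_rfl
  rw [← h'.start, hv₀] at this
  exact hvk this

theorem card_firstEdges_left_of_lt (h : IsTraversal σ d k l w v) (hι : Fintype.card ι = d + 1)
    (hkl : k < l) : #(firstEdges σ d (v k)) = 2 := by
  classical
  have hk := h.two_le_left
  have hkd := h.left_le
  refine card_eq_two.2 ⟨w 0, w (k - 1), h.edge_ne (by omega) (by omega) (by omega), ?_⟩
  ext i
  simp only [mem_insert, mem_singleton]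
  refine ⟨fun hi => ?_, ?_⟩
  · rcases h.exists_index_of_mem_firstEdges hι hi with rfl | rfl | rfl | ⟨-, rfl⟩
    exacts [.inr rfl, absurd hi (h.edge_left_notMem_of_lt hι hkl), .inl rfl,
      absurd hkl (lt_irrefl _)]
  · rintro (rfl | rfl)
    exacts [h.edge_zero_mem, h.edge_left_sub_mem]

theorem card_firstEdges_of_eq (h : IsTraversal σ d k k w v) (hι : Fintype.card ι = d + 1) :
    #(firstEdges σ d (v k)) = 4 := by
  classical
  have hk := h.two_le_left
  have hkd := h.right_lt
  have hlast : w d ∉ ({w 0, w (k - 1), w k} : Finset ι) := by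
    simp only [mem_insert, mem_singleton, not_or]
    exact ⟨h.edge_ne (by omega) (by omega) (by omega), h.edge_ne (by omega) (by omega) (by omega),
      h.edge_ne (by omega) (by omega) (by omega)⟩
  rw [show 4 = 3 + 1 by rfl, ← h.card_start_edges, ← card_insert_of_notMem hlast]
  congr 1
  ext i
  simp only [mem_insert, mem_singleton]
  refine ⟨fun hi => ?_, ?_⟩
  · rcases h.exists_index_of_mem_firstEdges hι hi with hi | hi | hi | ⟨hi, -⟩
    exacts [.inr (.inr (.inl hi)), .inr (.inr (.inr hi)), .inr (.inl hi), .inl hi]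
  · rintro (rfl | rfl | rfl | rfl)
    exacts [h.edge_last_mem, h.edge_zero_mem, h.edge_left_sub_mem, h.edge_right_mem]

theorem sum_card_firstEdges [Fintype α] (h : IsTraversal σ d k l w v)
    (hι : Fintype.card ι = d + 1) :
    ∑ x, #(firstEdges σ d x) = if l < k then 6 else 4 := by
  classical
  have hsum : ∑ x, #(firstEdges σ d x) = ∑ x ∈ {v k, v l}, #(firstEdges σ d x) := by
    refine (sum_subset (subset_univ _) fun x _ hx => ?_).symm
    refine card_eq_zero.2 (eq_empty_of_forall_notMem fun i hi => hx ?_)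
    rw [mem_insert, mem_singleton]
    exact h.start_eq_or_eq hι hi
  obtain rfl | hkl := eq_or_ne k l
  · rw [hsum, pair_eq_singleton, sum_singleton, h.card_firstEdges_of_eq hι, if_neg (lt_irrefl k)]
  have hv : v k ≠ v l := fun hv =>
    hkl (h.vertex_inj k h.one_le_left h.left_le l h.one_le_right h.right_le hv)
  have hk := h.left_le
  have hl := h.right_le
  have hrev : revVertices d v (d + 1 - l) = v l := by
    rw [revVertices, Nat.sub_sub_self (by omega)]
  rw [hsum, sum_pair hv]
  split_ifs with hlk
  · have := h.rev.card_firstEdges_left_of_gt hι (by omega)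
    rw [h.card_firstEdges_left_of_gt hι hlk, ← hrev, this]
  · have := h.rev.card_firstEdges_left_of_lt hι (by omega)
    rw [h.card_firstEdges_left_of_lt hι (by omega), ← hrev, this]

end IsTraversal

end FirstEdges

section Orientation

variable {α ι : Type*} [DecidableEq α] [CircularOrder ι] {σ : ι → Perm α} {d k l : ℕ}
  {w : ℕ → ι} {v : ℕ → α}

theorem not_sbtw_iff_of_ne {a b c : ι} (hab : a ≠ b) (hbc : b ≠ c) (hca : c ≠ a) :
    ¬ sbtw a b c ↔ sbtw c b a := by
  rw [sbtw_iff_not_btw, not_not, sbtw_iff_btw_not_btw, iff_self_and]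
  intro hcba habc
  rcases btw_antisymm habc hcba with h | h | h
  exacts [hab h, hbc h, hca h]

/-- In the cyclic order of the edges at the vertex `v k = v 0` the first edge of the traversal
lies between the edges `w (k - 1)` and `w k` by which the traversal passes through it. -/
def TurnsAtStart (k : ℕ) (w : ℕ → ι) : Prop := sbtw (w (k - 1)) (w 0) (w k)

/-- In the cyclic order of the edges at the vertex `v l = v (d + 1)` the last edge of the traversal
lies between the edges `w (l - 1)` and `w l` by which the traversal passes through it. -/
def TurnsAtEnd (d l : ℕ) (w : ℕ → ι) : Prop := sbtw (w (l - 1)) (w d) (w l)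

/-- The consequences of genus zero for the traversals of `σ`: when both ends of a traversal turn
to the same side, its two loops do not cross. -/
def IsNoncrossing (σ : ι → Perm α) (d : ℕ) : Prop :=
  ∀ ⦃k l w v⦄, IsTraversal σ d k l w v → TurnsAtStart k w → TurnsAtEnd d l w →
    k ≤ l ∧ (k = l → sbtw (w (k - 1)) (w 0) (w d))

namespace IsTraversal

theorem turnsAtStart_rev (h : IsTraversal σ d k l w v) :
    TurnsAtStart (d + 1 - l) (revEdges d w) ↔ ¬ TurnsAtEnd d l w := by
  have hl := h.one_le_right
  have hld := h.right_lt
  rw [TurnsAtStart, TurnsAtEnd, not_sbtw_iff_of_ne (h.edge_ne (by omega) (by omega) (by omega))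
    (h.edge_ne (by omega) (by omega) (by omega)) (h.edge_ne (by omega) (by omega) (by omega))]
  rw [revEdges, revEdges, revEdges, Nat.sub_zero, show d - (d + 1 - l - 1) = l by omega,
    show d - (d + 1 - l) = l - 1 by omega]

theorem turnsAtEnd_rev (h : IsTraversal σ d k l w v) :
    TurnsAtEnd d (d + 1 - k) (revEdges d w) ↔ ¬ TurnsAtStart k w := by
  have hk := h.two_le_left
  have hkd := h.left_le
  rw [TurnsAtStart, TurnsAtEnd, not_sbtw_iff_of_ne (h.edge_ne (by omega) (by omega) (by omega))
    (h.edge_ne (by omega) (by omega) (by omega)) (h.edge_ne (by omega) (by omega) (by omega))]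
  rw [revEdges, revEdges, revEdges, Nat.sub_self, show d - (d + 1 - k - 1) = k by omega,
    show d - (d + 1 - k) = k - 1 by omega]

theorem turnsAtEnd_flip (h : IsTraversal σ d k l w v) :
    TurnsAtEnd d l (flipEdges d l w) ↔ ¬ TurnsAtEnd d l w := by
  have hl := h.one_le_right
  have hld := h.right_lt
  rw [TurnsAtEnd, TurnsAtEnd, not_sbtw_iff_of_ne (h.edge_ne (by omega) (by omega) (by omega))
    (h.edge_ne (by omega) (by omega) (by omega)) (h.edge_ne (by omega) (by omega) (by omega)),
    flipEdges_of_lt (by omega), flipEdges_of_le hld.le, flipEdges_of_le le_rfl,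
    Nat.add_sub_cancel_left, Nat.add_sub_cancel]
  exact ⟨sbtw_cyclic_left, sbtw_cyclic_right⟩

theorem turnsAtStart_flip_of_turnsAtStart (h : IsTraversal σ d k l w v) (hσ : IsNoncrossing σ d)
    (hkl : k ≤ l) (hw : TurnsAtStart k w) : TurnsAtStart k (flipEdges d l w) := by
  have hk := h.two_le_left
  have hld := h.right_lt
  obtain rfl | hkl := hkl.eq_or_lt
  · rw [TurnsAtStart, flipEdges_of_lt (by omega), flipEdges_of_lt (by omega),
      flipEdges_of_le le_rfl, Nat.add_sub_cancel]
    by_cases hend : TurnsAtEnd d k w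
    · exact (hσ h hw hend).2 rfl
    · rw [TurnsAtEnd, not_sbtw_iff_of_ne (h.edge_ne (by omega) (by omega) (by omega))
        (h.edge_ne (by omega) (by omega) (by omega))
        (h.edge_ne (by omega) (by omega) (by omega))] at hend
      exact sbtw_trans_right hw hend.cyclic_right
  · rwa [TurnsAtStart, flipEdges_of_lt (by omega), flipEdges_of_lt (by omega), flipEdges_of_lt hkl]

theorem turnsAtStart_flip (h : IsTraversal σ d k l w v) (hσ : IsNoncrossing σ d) (hkl : k ≤ l) :
    TurnsAtStart k (flipEdges d l w) ↔ TurnsAtStart k w := by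
  refine ⟨fun hw => ?_, h.turnsAtStart_flip_of_turnsAtStart hσ hkl⟩
  have hld := h.right_lt
  have := (h.flip_of_le hkl).turnsAtStart_flip_of_turnsAtStart hσ hkl hw
  have hflip : ∀ j ≤ d, flipEdges d l (flipEdges d l w) j = w j := by
    intro j hj
    rcases lt_or_ge j l with hjl | hlj
    · rw [flipEdges_of_lt hjl, flipEdges_of_lt hjl]
    · rw [flipEdges_of_le hlj, flipEdges_of_le (by omega), Nat.sub_sub_self (by omega)]
  rwa [TurnsAtStart, hflip _ (by omega), hflip _ (by omega), hflip _ (by omega)] at this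

end IsTraversal

end Orientation

section Tours

variable {α : Type*} {d : ℕ}

/-- An order in which a traversal runs through all the edges, together with its vertices. -/
abbrev Tour (d : ℕ) (α : Type*) : Type _ := Perm (Fin (d + 1)) × (Fin (d + 2) → α)

/-- The `j`-th edge, for `j ≤ d`. -/
def edgeSeq (w : Perm (Fin (d + 1))) (j : ℕ) : Fin (d + 1) := w (Fin.ofNat (d + 1) j)

/-- The `j`-th vertex, for `j ≤ d + 1`. -/
def vertexSeq (v : Fin (d + 2) → α) (j : ℕ) : α := v (Fin.ofNat (d + 2) j)

theorem edgeSeq_val (w : Perm (Fin (d + 1))) (j : Fin (d + 1)) : edgeSeq w j = w j := by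
  rw [edgeSeq, Fin.ofNat_val_eq_self]

theorem vertexSeq_val (v : Fin (d + 2) → α) (j : Fin (d + 2)) : vertexSeq v j = v j := by
  rw [vertexSeq, Fin.ofNat_val_eq_self]

theorem tour_ext {p q : Tour d α} (hw : ∀ j ≤ d, edgeSeq p.1 j = edgeSeq q.1 j)
    (hv : ∀ j ≤ d + 1, vertexSeq p.2 j = vertexSeq q.2 j) : p = q := by
  refine Prod.ext (Equiv.ext fun j => ?_) (funext fun j => ?_)
  · rw [← edgeSeq_val, ← edgeSeq_val, hw j (by omega)]
  · rw [← vertexSeq_val p.2, ← vertexSeq_val q.2, hv j (by omega)]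

variable [DecidableEq α] {σ : Fin (d + 1) → Perm α} {k l : ℕ} {w : ℕ → Fin (d + 1)} {v : ℕ → α}

theorem IsTraversal.exists_tour (h : IsTraversal σ d k l w v) :
    ∃ p : Tour d α, (∀ j ≤ d, edgeSeq p.1 j = w j) ∧ ∀ j ≤ d + 1, vertexSeq p.2 j = v j := by
  have hinj : Function.Injective fun j : Fin (d + 1) => w j := fun a b hab =>
    Fin.ext (h.edge_inj a a.2 b b.2 hab)
  refine ⟨(Equiv.ofBijective _ (Finite.injective_iff_bijective.1 hinj), fun j => v j),
    fun j hj => ?_, fun j hj => ?_⟩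
  · simp only [edgeSeq, ofBijective_apply, Fin.val_ofNat, Nat.mod_eq_of_lt (Nat.lt_succ_of_le hj)]
  · simp only [vertexSeq, Fin.val_ofNat, Nat.mod_eq_of_lt (Nat.lt_succ_of_le hj)]

variable [Fintype α] {P P' : Prop → Prop → Prop}

open scoped Classical in
/-- The traversals of `σ` for which the two propositions that they turn at their start and at
their end are related by `P`. -/
noncomputable def tours (σ : Fin (d + 1) → Perm α) (P : Prop → Prop → Prop) :
    Finset (Tour d α) :=
  {p | ∃ k l, IsTraversal σ d k l (edgeSeq p.1) (vertexSeq p.2) ∧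
    P (TurnsAtStart k (edgeSeq p.1)) (TurnsAtEnd d l (edgeSeq p.1))}

theorem mem_tours {p : Tour d α} : p ∈ tours σ P ↔
    ∃ k l, IsTraversal σ d k l (edgeSeq p.1) (vertexSeq p.2) ∧
      P (TurnsAtStart k (edgeSeq p.1)) (TurnsAtEnd d l (edgeSeq p.1)) := by
  simp only [tours, mem_filter_univ]

theorem IsTraversal.exists_mem_tours (h : IsTraversal σ d k l w v)
    (hP : P (TurnsAtStart k w) (TurnsAtEnd d l w)) :
    ∃ p ∈ tours σ P, (∀ j ≤ d, edgeSeq p.1 j = w j) ∧ ∀ j ≤ d + 1, vertexSeq p.2 j = v j := by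
  obtain ⟨p, hw, hv⟩ := h.exists_tour
  refine ⟨p, mem_tours.2 ⟨k, l, h.congr hw hv, ?_⟩, hw, hv⟩
  have hk := h.left_le
  have hl := h.right_le
  rwa [TurnsAtStart, TurnsAtEnd, hw _ (by omega), hw _ (by omega), hw _ (by omega),
    hw _ (by omega), hw _ le_rfl, hw _ (by omega)]

theorem card_tours_eq_add (σ : Fin (d + 1) → Perm α) (P P' : Prop → Prop → Prop) :
    #(tours σ P) =
      #(tours σ fun s e => P s e ∧ P' s e) + #(tours σ fun s e => P s e ∧ ¬ P' s e) := by
  rw [← card_union_of_disjoint]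
  · congr 1
    ext p
    simp only [mem_union, mem_tours, ← exists_or, ← and_or_left, em, and_true]
  · refine disjoint_left.2 fun p hp hp' => ?_
    obtain ⟨k, l, h, -, hP⟩ := mem_tours.1 hp
    obtain ⟨k', l', h', -, hP'⟩ := mem_tours.1 hp'
    obtain rfl := h.left_unique h'
    obtain rfl := h.right_unique h'
    exact hP' hP

theorem card_tours_rev_le (hP : ∀ s e, P s e → P' (¬ e) (¬ s)) :
    #(tours σ P) ≤ #(tours σ P') := by
  refine card_le_card_of_forall_subsingleton (fun p q =>
    (∀ j ≤ d, edgeSeq q.1 j = revEdges d (edgeSeq p.1) j) ∧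
      ∀ j ≤ d + 1, vertexSeq q.2 j = revVertices d (vertexSeq p.2) j) (fun p hp => ?_) ?_
  · obtain ⟨k, l, h, hp⟩ := mem_tours.1 hp
    exact h.rev.exists_mem_tours (by
      rw [h.turnsAtStart_rev, h.turnsAtEnd_rev]
      exact hP _ _ hp)
  · rintro q - p ⟨-, hpw, hpv⟩ p' ⟨-, hpw', hpv'⟩
    refine tour_ext (fun j hj => ?_) fun j hj => ?_
    · have := (hpw (d - j) (by omega)).symm.trans (hpw' (d - j) (by omega))
      rwa [revEdges, revEdges, Nat.sub_sub_self hj] at this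
    · have := (hpv (d + 1 - j) (by omega)).symm.trans (hpv' (d + 1 - j) (by omega))
      rwa [revVertices, revVertices, Nat.sub_sub_self hj] at this

theorem eq_of_mem_tours (hP : ∀ s s' e, P s e → ¬ P s' (¬ e)) {p q : Tour d α}
    (hp : p ∈ tours σ P) (hq : q ∈ tours σ P) (hw : edgeSeq q.1 0 = edgeSeq p.1 0)
    (hv : vertexSeq q.2 0 = vertexSeq p.2 0) : q = p := by
  obtain ⟨k, l, h, hPp⟩ := mem_tours.1 hp
  obtain ⟨k', l', h', hPq⟩ := mem_tours.1 hq
  rcases h.eq_or_eq_flip h' (Fintype.card_fin _) hv hw with ⟨hw, hv⟩ | ⟨hw, hv⟩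
  · exact tour_ext hw hv
  · have hl := h.right_le
    obtain ⟨k'', hflip⟩ := h.exists_flip
    obtain rfl : l' = l := h'.right_unique (hflip.congr hw hv)
    rw [show TurnsAtEnd d l' (edgeSeq q.1) ↔ ¬ TurnsAtEnd d l' (edgeSeq p.1) by
      rw [← h.turnsAtEnd_flip, TurnsAtEnd, TurnsAtEnd, hw _ (by omega), hw _ le_rfl,
        hw _ hl]] at hPq
    exact absurd hPq (hP _ _ _ hPp)

/-- A first edge in a given direction extends to exactly two traversals, which differ by reversing
the final loop, hence turn to different sides at their end. -/
theorem card_tours_eq_sum (hP : ∀ s s' e, P s' (¬ e) ↔ ¬ P s e) :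
    #(tours σ P) = ∑ x, #(firstEdges σ d x) := by
  rw [← card_sigma]
  refine card_bij (fun p _ => ⟨vertexSeq p.2 0, edgeSeq p.1 0⟩) (fun p hp => ?_)
    (fun p hp q hq hpq => ?_) ?_
  · obtain ⟨k, l, h, -⟩ := mem_tours.1 hp
    exact mem_sigma.2 ⟨mem_univ _, mem_firstEdges.2 ⟨k, l, _, _, h, rfl, rfl⟩⟩
  · obtain ⟨hv, hw⟩ := Sigma.mk.inj_iff.1 hpq
    exact eq_of_mem_tours (fun s s' e h h' => (hP s s' e).1 h' h) hq hp (eq_of_heq hw) hv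
  · rintro ⟨x, i⟩ hxi
    obtain ⟨k, l, w, v, h, rfl, rfl⟩ := mem_firstEdges.1 (mem_sigma.1 hxi).2
    by_cases hPw : P (TurnsAtStart k w) (TurnsAtEnd d l w)
    · obtain ⟨p, hp, hw, hv⟩ := h.exists_mem_tours hPw
      exact ⟨p, hp, by rw [hw 0 d.zero_le, hv 0 (by omega)]⟩
    · obtain ⟨k', h'⟩ := h.exists_flip
      obtain ⟨p, hp, hw, hv⟩ := h'.exists_mem_tours (P := P)
        (by rw [h.turnsAtEnd_flip]; exact (hP _ _ _).2 hPw)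
      refine ⟨p, hp, ?_⟩
      rw [hw 0 d.zero_le, hv 0 (by omega), flipEdges_of_lt h.one_le_right,
        flipVertices_of_le (Nat.zero_le l)]

theorem card_tours_flip_le (hσ : IsNoncrossing σ d)
    (hle : ∀ k l w v, IsTraversal σ d k l w v → k ≤ l) (hP : ∀ s s' e, P s e → ¬ P s' (¬ e))
    (hPP' : ∀ s e, P s e → P' s (¬ e)) : #(tours σ P) ≤ #(tours σ P') := by
  refine card_le_card_of_forall_subsingleton (fun p q =>
    edgeSeq q.1 0 = edgeSeq p.1 0 ∧ vertexSeq q.2 0 = vertexSeq p.2 0) (fun p hp => ?_) ?_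
  · obtain ⟨k, l, h, hp⟩ := mem_tours.1 hp
    have hkl := hle _ _ _ _ h
    obtain ⟨q, hq, hw, hv⟩ := (h.flip_of_le hkl).exists_mem_tours (P := P') (by
      rw [h.turnsAtStart_flip hσ hkl, h.turnsAtEnd_flip]
      exact hPP' _ _ hp)
    refine ⟨q, hq, ?_, ?_⟩
    · rw [hw 0 d.zero_le, flipEdges_of_lt h.one_le_right]
    · rw [hv 0 (by omega), flipVertices_of_le (Nat.zero_le l)]
  · rintro q - p ⟨hp, hpw, hpv⟩ p' ⟨hp', hpw', hpv'⟩
    exact eq_of_mem_tours hP hp' hp (hpw.symm.trans hpw') (hpv.symm.trans hpv')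

/-- A tour is admissible unless it turns at its end but not at its start: in the theta and the
dumbbell case alike, `6` tours are. -/
theorem card_admissible_tours (h : IsTraversal σ d k l w v) (hσ : IsNoncrossing σ d) :
    #(tours σ fun s e => e → s) = 6 := by
  have hsum := h.sum_card_firstEdges (Fintype.card_fin _)
  have hadmissible := card_tours_eq_add σ (fun s e => e → s) fun _ e => e
  have hnot : #(tours σ fun _ e => ¬ e) = if l < k then 6 else 4 :=
    (card_tours_eq_sum (by tauto)).trans hsum
  have hnot_add := card_tours_eq_add σ (fun _ e => ¬ e) fun s _ => s
  rw [show (fun s e : Prop => (e → s) ∧ e) = fun s e => s ∧ e by ext; tauto,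
    show (fun s e : Prop => (e → s) ∧ ¬ e) = fun _ e => ¬ e by ext; tauto] at hadmissible
  rw [hnot] at hadmissible hnot_add
  rcases lt_or_ge l k with hlk | hkl
  · have hnone : tours σ (fun s e => s ∧ e) = ∅ := by
      refine eq_empty_of_forall_notMem fun p hp => ?_
      obtain ⟨k', l', h', hs, he⟩ := mem_tours.1 hp
      have hsum' := h'.sum_card_firstEdges (Fintype.card_fin _)
      rw [hsum, if_pos hlk, if_neg (hσ h' hs he).1.not_gt] at hsum'
      omega
    rw [hadmissible, hnone, card_empty, if_pos hlk]
  · have hle : ∀ k l w v, IsTraversal σ d k l w v → k ≤ l := by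
      intro k' l' w' v' h'
      have hsum' := h'.sum_card_firstEdges (Fintype.card_fin _)
      by_contra! hlk'
      rw [hsum, if_pos hlk', if_neg hkl.not_gt] at hsum'
      omega
    have hflip : #(tours σ fun s e => ¬ e ∧ s) = #(tours σ fun s e => s ∧ e) :=
      le_antisymm (card_tours_flip_le hσ hle (by tauto) (by tauto))
        (card_tours_flip_le hσ hle (by tauto) (by tauto))
    have hrev : #(tours σ fun s e => ¬ e ∧ ¬ s) = #(tours σ fun s e => s ∧ e) :=
      le_antisymm (card_tours_rev_le (by tauto)) (card_tours_rev_le (by tauto))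
    rw [if_neg hkl.not_gt] at hadmissible hnot_add
    omega

end Tours

/-! ### Traversals in time -/

section Flow

variable {α : Type*} {f g : ℕ → Perm α} {N : ℕ}

/-- The composite of the first `t` permutations of the sequence `f`, the later ones being applied
later. -/
def flow (f : ℕ → Perm α) : ℕ → Perm α
  | 0 => 1
  | t + 1 => f t * flow f t

theorem flow_add (f : ℕ → Perm α) (s t : ℕ) :
    flow f (s + t) = flow (fun i => f (s + i)) t * flow f s := by
  induction t with
  | zero => rw [flow, one_mul, Nat.add_zero]
  | succ t ih => rw [← Nat.add_assoc, flow, flow, ih, mul_assoc]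

theorem flow_add_period (hf : Function.Periodic f N) (t : ℕ) :
    flow f (t + N) = flow f t * flow f N := by
  rw [Nat.add_comm, flow_add, show (fun i => f (N + i)) = f from
    funext fun i => by rw [Nat.add_comm, hf i]]

theorem flow_add_mul_period (hf : Function.Periodic f N) (t a : ℕ) :
    flow f (t + a * N) = flow f t * flow f N ^ a := by
  induction a with
  | zero => rw [zero_mul, Nat.add_zero, pow_zero, mul_one]
  | succ a ih => rw [Nat.succ_mul, ← Nat.add_assoc, flow_add_period hf, ih, pow_succ, mul_assoc]

theorem flow_conj (f : ℕ → Perm α) (τ : Perm α) (t : ℕ) :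
    flow (fun s => τ * f s * τ⁻¹) t = τ * flow f t * τ⁻¹ := by
  induction t with
  | zero => rw [flow, flow, mul_one, mul_inv_cancel]
  | succ t ih => rw [flow, flow, ih]; group

theorem flow_apply_of_fixed {x y : α} {s t : ℕ} (hst : s ≤ t) (hs : flow f s x = y)
    (hfix : ∀ i, s ≤ i → i < t → f i y = y) : flow f t x = y := by
  induction t, hst using Nat.le_induction with
  | base => exact hs
  | succ t hst ih =>
    rw [flow, Perm.mul_apply, ih fun i hsi hit => hfix i hsi (by omega), hfix t hst (by omega)]

theorem flow_congr {t : ℕ} (hfg : ∀ s < t, f s = g s) : flow f t = flow g t := by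
  induction t with
  | zero => rfl
  | succ t ih => rw [flow, flow, hfg t t.lt_succ_self, ih fun s hs => hfg s (by omega)]

theorem flow_insert {i t : ℕ} (hit : i < t) (hi : f i = 1) (hfg : ∀ s < t, s ≠ i → g s = f s) :
    flow g t = flow f t * ((flow f i)⁻¹ * g i * flow f i) := by
  induction t, hit using Nat.le_induction with
  | base =>
    rw [flow, flow, hi, flow_congr fun s hs => hfg s (by omega) (by omega)]
    group
  | succ t hit ih =>
    rw [flow, flow, ih fun s hs => hfg s (by omega), hfg t (by omega) (by omega)]
    simp only [mul_assoc]

end Flow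

section Clock

variable {d : ℕ} (w : Perm (Fin (d + 1)))

/-- The edges are applied periodically in their numerical order. This is the position in the
traversal `w` of the edge applied at time `t`, when the first edge of `w` is applied at time `0`. -/
def clock (t : ℕ) : ℕ := w.symm (w 0 + Fin.ofNat (d + 1) t)

/-- Among the times at which the `j`-th edge of the traversal `w` is applied, the first one after
`visitTime w (j - 1)`, beginning with `visitTime w 0 = 0`. -/
def visitTime : ℕ → ℕ
  | 0 => 0
  | j + 1 => visitTime j + (edgeSeq w (j + 1) - edgeSeq w j).val

theorem clock_le (t : ℕ) : clock w t ≤ d := Nat.le_of_lt_succ (w.symm _).isLt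

theorem clock_eq_iff {s t : ℕ} : clock w s = clock w t ↔ s ≡ t [MOD d + 1] := by
  rw [clock, clock, Fin.val_inj, w.symm.injective.eq_iff, add_right_inj, Fin.ext_iff]
  rfl

theorem clock_periodic : Function.Periodic (clock w) (d + 1) := fun t =>
  (clock_eq_iff w).2 (Nat.add_mod_right t (d + 1))

theorem ofNat_add (a b : ℕ) :
    Fin.ofNat (d + 1) (a + b) = Fin.ofNat (d + 1) a + Fin.ofNat (d + 1) b :=
  Fin.ext (Nat.add_mod a b (d + 1))

theorem clock_eq_of_edge {t j : ℕ} (hj : j ≤ d) (ht : w 0 + Fin.ofNat (d + 1) t = edgeSeq w j) :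
    clock w t = j := by
  rw [clock, ht, edgeSeq, symm_apply_apply, Fin.val_ofNat, Nat.mod_eq_of_lt (by omega)]

theorem edge_visitTime (j : ℕ) :
    w 0 + Fin.ofNat (d + 1) (visitTime w j) = edgeSeq w j := by
  induction j with
  | zero => exact add_zero (w 0)
  | succ j ih => rw [visitTime, ofNat_add, ← add_assoc, ih, Fin.ofNat_val_eq_self, add_sub_cancel]

theorem clock_visitTime {j : ℕ} (hj : j ≤ d) : clock w (visitTime w j) = j :=
  clock_eq_of_edge w hj (edge_visitTime w j)

theorem visitTime_succ_lt (j : ℕ) : visitTime w (j + 1) < visitTime w j + (d + 1) :=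
  Nat.add_lt_add_left (Fin.isLt _) _

theorem visitTime_lt_succ {j : ℕ} (hj : j < d) : visitTime w j < visitTime w (j + 1) := by
  refine lt_of_le_of_ne (Nat.le_add_right _ _) fun h => ?_
  have := clock_visitTime w hj.le
  rw [h, clock_visitTime w hj] at this
  omega

theorem visitTime_mono : Monotone (visitTime w) :=
  monotone_nat_of_le_succ fun _ => Nat.le_add_right _ _

theorem visitTime_le (j : ℕ) : visitTime w j ≤ j * d := by
  induction j with
  | zero => exact Nat.zero_le _
  | succ j ih =>
    rw [visitTime, Nat.succ_mul]
    exact Nat.add_le_add ih (Nat.le_of_lt_succ (Fin.isLt _))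

theorem exists_visitTime_lt_le {n t : ℕ} (ht : 0 < t) (htn : t ≤ visitTime w n) :
    ∃ j < n, visitTime w j < t ∧ t ≤ visitTime w (j + 1) := by
  induction n with
  | zero => exact absurd htn ht.not_ge
  | succ n ih =>
    rcases le_or_gt t (visitTime w n) with h | h
    · obtain ⟨j, hj, htj⟩ := ih h
      exact ⟨j, by omega, htj⟩
    · exact ⟨n, n.lt_succ_self, h, htn⟩

theorem clock_ne_of_lt {j t : ℕ} (hj : j ≤ d) (ht : t ≠ visitTime w j)
    (htj : t < visitTime w j + (d + 1)) (hjt : visitTime w j < t + (d + 1)) : clock w t ≠ j := by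
  intro h
  rw [← clock_visitTime w hj, clock_eq_iff] at h
  exact ht (Nat.ModEq.eq_of_abs_lt h (by rw [abs_lt]; push_cast; omega))

end Clock

section JoinCycles

variable {α : Type*} {N : Perm α} {s t : Finset α} {x y p : α} {f i n : ℕ}

theorem pow_apply_mem (hs : N.IsCycleOn s) (hp : p ∈ s) (n : ℕ) : (N ^ n) p ∈ s :=
  mem_coe.1 (hs.1.mapsTo.perm_pow n hp)

theorem exists_pow_eq_of_mem (hs : N.IsCycleOn s) (hx : x ∈ s) (hy : y ∈ s) :
    ∃ i, 1 ≤ i ∧ i ≤ #s ∧ (N ^ i) x = y := by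
  obtain ⟨i, hi, rfl⟩ := hs.exists_pow_eq hx hy
  obtain rfl | hi0 := i.eq_zero_or_pos
  · exact ⟨#s, hi, le_rfl, hs.pow_card_apply hx⟩
  · exact ⟨i, hi0, hi.le, rfl⟩

variable [DecidableEq α]

theorem pow_mul_swap_apply_of_ne (h : ∀ j < n, (N ^ j) p ≠ x ∧ (N ^ j) p ≠ y) :
    ((N * swap x y) ^ n) p = (N ^ n) p := by
  induction n with
  | zero => rfl
  | succ n ih =>
    obtain ⟨hx, hy⟩ := h n n.lt_succ_self
    rw [pow_succ', Perm.mul_apply, ih fun j hj => h j (by omega), Perm.mul_apply,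
      swap_apply_of_ne_of_ne hx hy, pow_succ', Perm.mul_apply]

theorem pow_mul_swap_apply_left (ht : N.IsCycleOn t) (hx : x ∉ t) (hy : y ∈ t) (hi : 1 ≤ i)
    (hit : i ≤ #t) : ((N * swap x y) ^ i) x = (N ^ i) y := by
  obtain ⟨i, rfl⟩ := Nat.exists_eq_add_of_le' hi
  rw [pow_succ, Perm.mul_apply, Perm.mul_apply, swap_apply_left, pow_succ, Perm.mul_apply]
  refine pow_mul_swap_apply_of_ne fun j hj => ?_
  rw [← Perm.mul_apply, ← pow_succ]
  refine ⟨fun h => hx (h ▸ pow_apply_mem ht hy _), fun h => ?_⟩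
  have := Nat.le_of_dvd j.succ_pos ((ht.pow_apply_eq hy).1 h)
  omega

theorem pow_card_mul_swap_apply_left (ht : N.IsCycleOn t) (hx : x ∉ t) (hy : y ∈ t) :
    ((N * swap x y) ^ #t) x = y := by
  rw [pow_mul_swap_apply_left ht hx hy (card_pos.2 ⟨y, hy⟩) le_rfl, ht.pow_card_apply hy]

theorem pow_add_card_mul_swap_apply_left (hs : N.IsCycleOn s) (ht : N.IsCycleOn t)
    (hst : Disjoint s t) (hx : x ∈ s) (hy : y ∈ t) (hi : 1 ≤ i) (his : i ≤ #s) :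
    ((N * swap x y) ^ (i + #t)) x = (N ^ i) x := by
  rw [pow_add, Perm.mul_apply,
    pow_card_mul_swap_apply_left ht (disjoint_left.1 hst hx) hy, swap_comm,
    pow_mul_swap_apply_left hs (disjoint_right.1 hst hy) hx hi his]

theorem isCycleOn_union_mul_swap (hs : N.IsCycleOn s) (ht : N.IsCycleOn t) (hst : Disjoint s t)
    (hx : x ∈ s) (hy : y ∈ t) : (N * swap x y).IsCycleOn ((s ∪ t : Finset α) : Set α) := by
  rw [coe_union]
  have hbij : Set.BijOn N (s ∪ t) (s ∪ t) :=
    hs.1.union ht.1 (N.injective.injOn)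
  have hreach : ∀ z ∈ (s ∪ t : Set α), (N * swap x y).SameCycle x z := by
    rintro z (hz | hz)
    · obtain ⟨i, hi, his, rfl⟩ := exists_pow_eq_of_mem hs hx hz
      exact ⟨(i + #t : ℕ), pow_add_card_mul_swap_apply_left hs ht hst hx hy hi his⟩
    · obtain ⟨i, hi, hit, rfl⟩ := exists_pow_eq_of_mem ht hy hz
      exact ⟨i, pow_mul_swap_apply_left ht (disjoint_left.1 hst hx) hy hi hit⟩
  exact ⟨hbij.comp (bijOn_swap (Or.inl hx) (Or.inr hy)),
    fun a ha b hb => (hreach a ha).symm.trans (hreach b hb)⟩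

theorem isCycleOn_mul_swap_of_notMem (hs : N.IsCycleOn s) (hx : x ∉ s) (hy : y ∉ s) :
    (N * swap x y).IsCycleOn s := by
  have hne : ∀ {z}, z ∈ s → z ≠ x ∧ z ≠ y := fun hz =>
    ⟨fun h => hx (h ▸ hz), fun h => hy (h ▸ hz)⟩
  refine ⟨hs.1.congr fun z hz => ?_, fun a ha b hb => ?_⟩
  · obtain ⟨hzx, hzy⟩ := hne hz
    rw [Perm.mul_apply, swap_apply_of_ne_of_ne hzx hzy]
  · obtain ⟨n, -, rfl⟩ := hs.exists_pow_eq ha hb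
    exact ⟨n, pow_mul_swap_apply_of_ne fun j _ => hne (pow_apply_mem hs ha j)⟩

variable (hs : N.IsCycleOn s) (ht : N.IsCycleOn t) (hst : Disjoint s t) (hp : p ∈ s) (hy : y ∈ t)
include hs hst hp hy

theorem pow_joined_apply_of_le (hf : f < #s) (hi : i ≤ f) :
    ((N * swap ((N ^ f) p) y) ^ i) p = (N ^ i) p := by
  refine pow_mul_swap_apply_of_ne fun j hj => ⟨fun h => ?_, fun h => ?_⟩
  · have := ((hs.pow_apply_eq_pow_apply hp).1 h).eq_of_lt_of_lt (by omega) hf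
    omega
  · exact disjoint_left.1 hst (pow_apply_mem hs hp j) (h ▸ hy)

include ht

theorem pow_joined_apply_add_card (hf : f < #s) :
    ((N * swap ((N ^ f) p) y) ^ (f + #t)) p = y := by
  rw [Nat.add_comm, pow_add, Perm.mul_apply, pow_joined_apply_of_le hs hst hp hy hf le_rfl,
    pow_card_mul_swap_apply_left ht (disjoint_left.1 hst (pow_apply_mem hs hp f)) hy]

theorem pow_joined_apply_of_gt (hfi : f < i) (his : i < #s) :
    ((N * swap ((N ^ f) p) y) ^ (i + #t)) p = (N ^ i) p := by
  rw [show i + #t = (i - f + #t) + f by omega, pow_add, Perm.mul_apply,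
    pow_joined_apply_of_le hs hst hp hy (hfi.trans his) le_rfl,
    pow_add_card_mul_swap_apply_left hs ht hst (pow_apply_mem hs hp f) hy (by omega) (by omega),
    ← Perm.mul_apply, ← pow_add, Nat.sub_add_cancel hfi.le]

end JoinCycles

/-! ### Gluing the cycles of a permutation -/

section CycleColoring

variable {α κ : Type*} [Fintype α] [DecidableEq κ] {c : α → κ} {M g : Perm α} {i : κ} {a : α}

/-- The set of points of colour `i`. -/
def fiber (c : α → κ) (i : κ) : Finset α := {a | c a = i}

theorem mem_fiber : a ∈ fiber c i ↔ c a = i := mem_filter_univ a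

/-- The map `c` numbers the cycles of `M`, fixed points included, by the elements of `κ`. -/
structure IsCycleColoring (c : α → κ) (M : Perm α) : Prop where
  surjective : c.Surjective
  isCycleOn : ∀ i, M.IsCycleOn (fiber c i)

namespace IsCycleColoring

theorem color_apply (hc : IsCycleColoring c M) (a : α) : c (M a) = c a :=
  mem_fiber.1 (mem_coe.1 ((hc.isCycleOn (c a)).apply_mem_iff.2 (mem_coe.2 (mem_fiber.2 rfl))))

theorem conj (hc : IsCycleColoring c M) (g : Perm α) :
    IsCycleColoring (c ∘ g.symm) (g * M * g⁻¹) where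
  surjective := hc.surjective.comp g.symm.surjective
  isCycleOn i := by
    convert! (hc.isCycleOn i).conj (g := g)
    ext a
    rw [mem_coe, mem_fiber, Equiv.image_eq_preimage_symm, Set.mem_preimage, mem_coe, mem_fiber,
      Function.comp_apply]

end IsCycleColoring

theorem card_bijective_comp [Fintype κ] (c : α → κ)
    [DecidablePred fun t : κ → α => (c ∘ t).Bijective] :
    #{t : κ → α | (c ∘ t).Bijective} = (Fintype.card κ).factorial * ∏ i, #(fiber c i) := by
  classical
  have hunion : ({t : κ → α | (c ∘ t).Bijective} : Finset _) =
      univ.biUnion fun e : Perm κ => Fintype.piFinset fun i => fiber c (e i) := by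
    ext t
    simp only [mem_filter_univ, mem_biUnion, mem_univ, true_and, Fintype.mem_piFinset, mem_fiber]
    exact ⟨fun h => ⟨ofBijective _ h, fun i => rfl⟩,
      fun ⟨e, he⟩ => (funext he : c ∘ t = e) ▸ e.bijective⟩
  rw [hunion, card_biUnion]
  · simp only [Fintype.card_piFinset, Equiv.prod_comp _ fun i => #(fiber c i), sum_const, card_univ,
      Fintype.card_perm, smul_eq_mul]
  · refine fun e _ e' _ hne => disjoint_left.2 fun t ht ht' => hne (Equiv.ext fun i => ?_)
    rw [Fintype.mem_piFinset] at ht ht'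
    exact (mem_fiber.1 (ht i)).symm.trans (mem_fiber.1 (ht' i))

end CycleColoring

section Gluing

variable {α : Type*} [DecidableEq α] {c : α → Fin 3} {M : Perm α}
  {x' y' x y : α}

/-- The permutation `M` after joining or cutting its cycles at `x`, `y` and at `x'`, `y'`. -/
def glue (M : Perm α) (x y x' y' : α) : Perm α := M * swap x y * swap x' y'

theorem glue_swap (M : Perm α) (x y x' y' : α) : glue M x y x' y' = glue M x y y' x' := by
  rw [glue, glue, swap_comm x']

theorem color_mem_swap_apply {K : Finset (Fin 3)} (hK : c x ∈ K ↔ c y ∈ K) (z : α) :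
    c (swap x y z) ∈ K ↔ c z ∈ K := by
  rw [swap_apply_def]
  split_ifs with hx hy
  · rw [hx, hK]
  · rw [hy, hK]
  · rfl

/-- Two transpositions glue the cycles of `M` to a single one, and in the latter the first point
`x'` of the second transposition comes `e` steps after the first point `x` of the first one. -/
structure IsGluing (M : Perm α) (e : ℕ) (x y x' y' : α) : Prop where
  isCycleOn : (glue M x y x' y').IsCycleOn Set.univ
  pow_apply : (glue M x y x' y' ^ e) x = x'

variable [Fintype α]

theorem colors_of_isCycleOn_glue (hc : IsCycleColoring c M)
    (h : (glue M x y x' y').IsCycleOn Set.univ) :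
    c x ≠ c y ∧ ((c x ≠ c y' ∧ c y ≠ c y' ∧ c x' ≠ c y') ∨
      (c x ≠ c x' ∧ c y ≠ c x' ∧ c y' ≠ c x')) := by
  have hK : ∀ K : Finset (Fin 3), (c x ∈ K ↔ c y ∈ K) → (c x' ∈ K ↔ c y' ∈ K) →
      K.Nonempty → K = univ := by
    refine fun K hxy hxy' ⟨i, hi⟩ => eq_univ_of_forall fun j => ?_
    obtain ⟨a, rfl⟩ := hc.surjective i
    obtain ⟨b, rfl⟩ := hc.surjective j
    obtain ⟨n, rfl⟩ := h.exists_pow_eq' Set.finite_univ (Set.mem_univ a) (Set.mem_univ b)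
    induction n with
    | zero => exact hi
    | succ n ih =>
      rwa [pow_succ', Perm.mul_apply, glue, Perm.mul_apply, Perm.mul_apply, hc.color_apply,
        color_mem_swap_apply hxy, color_mem_swap_apply hxy']
  generalize c x = i, c y = j, c x' = k, c y' = l at hK
  revert i j k l
  decide

end Gluing

section Gluing

variable {α : Type*} [Fintype α] {c : α → Fin 3} {M : Perm α}
  {e f i a : ℕ} {x y r p : α}

theorem eq_of_pow_apply_eq {Q : Perm α} (hQ : Q.IsCycleOn Set.univ) {i j : ℕ}
    (hi : i < Fintype.card α) (hj : j < Fintype.card α) (h : (Q ^ i) x = (Q ^ j) x) : i = j := by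
  rw [← coe_univ] at hQ
  exact ((hQ.pow_apply_eq_pow_apply (mem_univ x)).1 h).eq_of_lt_of_lt hi hj

theorem disjoint_fiber {i j : Fin 3} (hij : i ≠ j) : Disjoint (fiber c i) (fiber c j) :=
  disjoint_left.2 fun _ hi hj => hij ((mem_fiber.1 hi).symm.trans (mem_fiber.1 hj))

theorem compl_fiber_eq_union [DecidableEq α] (hxy : c x ≠ c y) (hxr : c x ≠ c r) (hyr : c y ≠ c r) :
    (fiber c (c r))ᶜ = fiber c (c x) ∪ fiber c (c y) := by
  ext a
  rw [mem_compl, mem_union, mem_fiber, mem_fiber, mem_fiber]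
  generalize c a = i, c x = j, c y = k, c r = l at *
  revert i j k l
  decide

theorem card_fiber_add (hxy : c x ≠ c y) (hxr : c x ≠ c r) (hyr : c y ≠ c r) :
    #(fiber c (c x)) + #(fiber c (c y)) + #(fiber c (c r)) = Fintype.card α := by
  classical
  rw [← card_union_of_disjoint (disjoint_fiber hxy), ← compl_fiber_eq_union hxy hxr hyr,
    card_compl_add_card]

variable [DecidableEq α]

namespace IsCycleColoring

variable (hc : IsCycleColoring c M)
include hc

theorem pow_card_fiber_apply (hxy : c x ≠ c y) :
    ((M * swap x y) ^ #(fiber c (c y))) x = y :=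
  pow_card_mul_swap_apply_left (hc.isCycleOn _) (fun h => hxy (mem_fiber.1 h)) (mem_fiber.2 rfl)

theorem isCycleOn_fiber_mul_swap (hxr : c x ≠ c r) (hyr : c y ≠ c r) :
    (M * swap x y).IsCycleOn (fiber c (c r)) :=
  isCycleOn_mul_swap_of_notMem (hc.isCycleOn _) (fun h => hxr (mem_fiber.1 h))
    fun h => hyr (mem_fiber.1 h)

variable (hxy : c x ≠ c y) (hxr : c x ≠ c r) (hyr : c y ≠ c r)
include hxy hxr hyr

theorem isCycleOn_compl_mul_swap : (M * swap x y).IsCycleOn ((fiber c (c r))ᶜ : Finset α) := by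
  rw [compl_fiber_eq_union hxy hxr hyr]
  exact isCycleOn_union_mul_swap (hc.isCycleOn _) (hc.isCycleOn _) (disjoint_fiber hxy)
    (mem_fiber.2 rfl) (mem_fiber.2 rfl)

theorem color_pow_apply_ne (n : ℕ) : c (((M * swap x y) ^ n) x) ≠ c r := by
  have := pow_apply_mem (hc.isCycleOn_compl_mul_swap hxy hxr hyr)
    (mem_compl.2 fun h => hxr (mem_fiber.1 h)) n
  rwa [mem_compl, mem_fiber] at this

theorem exists_pow_mul_swap_apply (hp : c p ≠ c r) :
    ∃ f, f + #(fiber c (c r)) < Fintype.card α ∧ ((M * swap x y) ^ f) x = p := by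
  obtain ⟨f, hf, hfp⟩ := (hc.isCycleOn_compl_mul_swap hxy hxr hyr).exists_pow_eq
    (mem_compl.2 fun h => hxr (mem_fiber.1 h)) (mem_compl.2 fun h => hp (mem_fiber.1 h))
  rw [card_compl] at hf
  exact ⟨f, by omega, hfp⟩

theorem isCycleOn_glue (hp : c p ≠ c r) : (glue M x y p r).IsCycleOn Set.univ := by
  rw [← coe_univ, ← union_compl (fiber c (c r)), union_comm]
  exact isCycleOn_union_mul_swap (hc.isCycleOn_compl_mul_swap hxy hxr hyr)
    (hc.isCycleOn_fiber_mul_swap hxr hyr) disjoint_compl_left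
    (mem_compl.2 fun h => hp (mem_fiber.1 h)) (mem_fiber.2 rfl)

theorem pow_glue_apply_of_le (hf : f + #(fiber c (c r)) < Fintype.card α) (hi : i ≤ f) :
    (glue M x y (((M * swap x y) ^ f) x) r ^ i) x = ((M * swap x y) ^ i) x :=
  pow_joined_apply_of_le (hc.isCycleOn_compl_mul_swap hxy hxr hyr) disjoint_compl_left
    (mem_compl.2 fun h => hxr (mem_fiber.1 h)) (mem_fiber.2 rfl)
    (by rw [card_compl]; omega) hi

theorem pow_glue_apply_add_card (hf : f + #(fiber c (c r)) < Fintype.card α) :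
    (glue M x y (((M * swap x y) ^ f) x) r ^ (f + #(fiber c (c r)))) x = r :=
  pow_joined_apply_add_card (hc.isCycleOn_compl_mul_swap hxy hxr hyr)
    (hc.isCycleOn_fiber_mul_swap hxr hyr) disjoint_compl_left
    (mem_compl.2 fun h => hxr (mem_fiber.1 h)) (mem_fiber.2 rfl)
    (by rw [card_compl]; omega)

theorem pow_glue_apply_eq_iff (hf : f + #(fiber c (c r)) < Fintype.card α)
    (hi : i ≤ f + #(fiber c (c r))) :
    (glue M x y (((M * swap x y) ^ f) x) r ^ i) x = y ↔
      i = #(fiber c (c y)) ∧ #(fiber c (c y)) ≤ f := by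
  have hcyc := hc.isCycleOn_glue hxy hxr hyr (hc.color_pow_apply_ne hxy hxr hyr f)
  have hcard := card_fiber_add hxy hxr hyr
  have hxpos : 0 < #(fiber c (c x)) := card_pos.2 ⟨x, mem_fiber.2 rfl⟩
  rcases le_or_gt #(fiber c (c y)) f with hyf | hfy
  · have hy := hc.pow_card_fiber_apply hxy
    rw [← hc.pow_glue_apply_of_le hxy hxr hyr hf hyf] at hy
    refine ⟨fun h => ⟨eq_of_pow_apply_eq hcyc (by omega) (by omega) (h.trans hy.symm), hyf⟩, ?_⟩
    rintro ⟨rfl, -⟩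
    exact hy
  · have hy := pow_joined_apply_of_gt (hc.isCycleOn_compl_mul_swap hxy hxr hyr)
      (hc.isCycleOn_fiber_mul_swap hxr hyr) disjoint_compl_left
      (mem_compl.2 fun h => hxr (mem_fiber.1 h)) (mem_fiber.2 rfl) hfy (by rw [card_compl]; omega)
    rw [hc.pow_card_fiber_apply hxy] at hy
    refine ⟨fun h => ?_, fun h => absurd h.2 hfy.not_ge⟩
    have := eq_of_pow_apply_eq hcyc (by omega) (by omega) (h.trans hy.symm)
    omega

theorem isGluing_iff_of_third_right (he : e < Fintype.card α) (hp : c p ≠ c r) :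
    IsGluing M e x y p r ↔
      e + #(fiber c (c r)) < Fintype.card α ∧ ((M * swap x y) ^ e) x = p := by
  have hcyc := hc.isCycleOn_glue hxy hxr hyr hp
  constructor
  · intro h
    obtain ⟨f, hf, rfl⟩ := hc.exists_pow_mul_swap_apply hxy hxr hyr hp
    obtain rfl := eq_of_pow_apply_eq hcyc he (by omega)
      (h.pow_apply.trans (hc.pow_glue_apply_of_le hxy hxr hyr hf le_rfl).symm)
    exact ⟨hf, rfl⟩
  · rintro ⟨he, rfl⟩
    exact ⟨hcyc, hc.pow_glue_apply_of_le hxy hxr hyr he le_rfl⟩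

theorem isGluing_iff_of_third_left (he : e < Fintype.card α) (hp : c p ≠ c r) :
    IsGluing M e x y r p ↔
      #(fiber c (c r)) ≤ e ∧ ((M * swap x y) ^ (e - #(fiber c (c r)))) x = p := by
  have hcyc := hc.isCycleOn_glue hxy hxr hyr hp
  constructor
  · intro h
    obtain ⟨f, hf, rfl⟩ := hc.exists_pow_mul_swap_apply hxy hxr hyr hp
    have hr := h.pow_apply
    rw [glue_swap] at hr
    obtain rfl := eq_of_pow_apply_eq hcyc he hf
      (hr.trans (hc.pow_glue_apply_add_card hxy hxr hyr hf).symm)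
    exact ⟨Nat.le_add_left _ _, by rw [Nat.add_sub_cancel]⟩
  · rintro ⟨hre, rfl⟩
    obtain ⟨f, rfl⟩ := Nat.exists_eq_add_of_le' hre
    rw [Nat.add_sub_cancel] at hcyc ⊢
    exact ⟨by rwa [glue_swap], by rw [glue_swap, hc.pow_glue_apply_add_card hxy hxr hyr he]⟩

end IsCycleColoring

end Gluing

section AdmissibleGluings

theorem bijective_comp_iff {α : Type*} {c : α → Fin 3} {t : Fin 3 → α} :
    (c ∘ t).Bijective ↔ c (t 0) ≠ c (t 1) ∧ c (t 0) ≠ c (t 2) ∧ c (t 1) ≠ c (t 2) := by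
  rw [← Finite.injective_iff_bijective]
  refine ⟨fun h => ⟨h.ne (by decide), h.ne (by decide), h.ne (by decide)⟩, fun h i j hij => ?_⟩
  rw [Function.comp_apply, Function.comp_apply] at hij
  fin_cases i <;> fin_cases j <;> simp_all

variable {α : Type*} [Fintype α] [DecidableEq α] {c : α → Fin 3} {M : Perm α}
  {e i a : ℕ} {x y x' y' r p : α}

/-- The second point `y` of the first transposition comes before the first point `x'` of the second
one in the cycle started at `x`. -/
def MeetsStart (M : Perm α) (e : ℕ) (x y x' y' : α) : Prop :=
  ∃ i ≤ e, (glue M x y x' y' ^ i) x = y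

/-- The second point `y'` of the second transposition comes before its first point `x'` in the
cycle started at `x`. -/
def MeetsEnd (M : Perm α) (e : ℕ) (x y x' y' : α) : Prop :=
  ∃ i < e, (glue M x y x' y' ^ i) x = y'

namespace IsCycleColoring

section Ends

variable (hc : IsCycleColoring c M) (he : e < Fintype.card α) (hxy : c x ≠ c y) (hxr : c x ≠ c r)
  (hyr : c y ≠ c r) (hp : c p ≠ c r)
include hc he hxy hxr hyr hp

theorem not_meetsEnd_of_third_right (h : IsGluing M e x y p r) : ¬ MeetsEnd M e x y p r := by
  obtain ⟨hre, rfl⟩ := (hc.isGluing_iff_of_third_right hxy hxr hyr he hp).1 h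
  rintro ⟨i, hi, hir⟩
  rw [hc.pow_glue_apply_of_le hxy hxr hyr hre hi.le] at hir
  exact hc.color_pow_apply_ne hxy hxr hyr i (congrArg c hir)

theorem pow_glue_apply_of_third_left (h : IsGluing M e x y r p) :
    (glue M x y r p ^ (e - #(fiber c (c r)))) x = p := by
  obtain ⟨hre, rfl⟩ := (hc.isGluing_iff_of_third_left hxy hxr hyr he hp).1 h
  rw [glue_swap, hc.pow_glue_apply_of_le hxy hxr hyr (by omega) le_rfl]

theorem pow_glue_apply_eq_iff_of_third_left (h : IsGluing M e x y r p) (hi : i ≤ e) :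
    (glue M x y r p ^ i) x = y ↔
      i = #(fiber c (c y)) ∧ #(fiber c (c y)) + #(fiber c (c r)) ≤ e := by
  obtain ⟨hre, rfl⟩ := (hc.isGluing_iff_of_third_left hxy hxr hyr he hp).1 h
  rw [glue_swap, hc.pow_glue_apply_eq_iff hxy hxr hyr (by omega) (by omega),
    Nat.le_sub_iff_add_le hre]

theorem meetsEnd_of_third_left (h : IsGluing M e x y r p) : MeetsEnd M e x y r p := by
  have hr : 0 < #(fiber c (c r)) := card_pos.2 ⟨r, mem_fiber.2 rfl⟩
  have hre := ((hc.isGluing_iff_of_third_left hxy hxr hyr he hp).1 h).1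
  exact ⟨_, by omega, hc.pow_glue_apply_of_third_left he hxy hxr hyr hp h⟩

theorem meetsStart_iff_of_third_left (h : IsGluing M e x y r p) :
    MeetsStart M e x y r p ↔ Fintype.card α ≤ e + #(fiber c (c x)) := by
  have hcard := card_fiber_add hxy hxr hyr
  constructor
  · rintro ⟨i, hi, hiy⟩
    have := ((hc.pow_glue_apply_eq_iff_of_third_left he hxy hxr hyr hp h hi).1 hiy).2
    omega
  · intro hx
    have hi : #(fiber c (c y)) ≤ e := by omega
    exact ⟨_, hi, (hc.pow_glue_apply_eq_iff_of_third_left he hxy hxr hyr hp h hi).2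
      ⟨rfl, by omega⟩⟩

end Ends

theorem start_le_end (hc : IsCycleColoring c M) (h : IsGluing M e x y x' y')
    (he : e < Fintype.card α) (hi : i ≤ e) (hiy : (glue M x y x' y' ^ i) x = y) (ha : a < e)
    (hay : (glue M x y x' y' ^ a) x = y') : i ≤ a := by
  obtain ⟨hxy, ⟨hxr, hyr, hp⟩ | ⟨hxr, hyr, hp⟩⟩ := colors_of_isCycleOn_glue hc h.isCycleOn
  · exact absurd ⟨a, ha, hay⟩ (hc.not_meetsEnd_of_third_right he hxy hxr hyr hp h)
  · obtain ⟨rfl, hyr'⟩ := (hc.pow_glue_apply_eq_iff_of_third_left he hxy hxr hyr hp h hi).1 hiy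
    have := eq_of_pow_apply_eq h.isCycleOn (by omega) (by omega)
      (hay.trans (hc.pow_glue_apply_of_third_left he hxy hxr hyr hp h).symm)
    omega

end IsCycleColoring

/-- A triple of points in different cycles of `M` determines two transpositions: the first one
joins two of the cycles, the second one the third cycle to them, at a place determined by `e`. -/
def gluingOfTriple (c : α → Fin 3) (M : Perm α) (e : ℕ) (t : Fin 3 → α) : α × α × α × α :=
  if e + #(fiber c (c (t 2))) < Fintype.card α then
    (t 0, t 1, ((M * swap (t 0) (t 1)) ^ e) (t 0), t 2)
  else (t 2, t 1, t 0, ((M * swap (t 2) (t 1)) ^ (e - #(fiber c (c (t 0))))) (t 2))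

/-- The inverse of `gluingOfTriple`. -/
def tripleOfGluing (c : α → Fin 3) (q : α × α × α × α) : Fin 3 → α :=
  if c q.2.2.2 = c q.1 ∨ c q.2.2.2 = c q.2.1 then ![q.2.2.1, q.2.1, q.1]
  else ![q.1, q.2.1, q.2.2.2]

open scoped Classical in
/-- The pairs of transpositions which glue the cycles of `M` and whose second transposition does
not close up a loop before the first one has done so. -/
noncomputable def admissibleGluings (M : Perm α) (e : ℕ) : Finset (α × α × α × α) :=
  {q | IsGluing M e q.1 q.2.1 q.2.2.1 q.2.2.2 ∧
    (MeetsEnd M e q.1 q.2.1 q.2.2.1 q.2.2.2 → MeetsStart M e q.1 q.2.1 q.2.2.1 q.2.2.2)}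

theorem mem_admissibleGluings : (x, y, x', y') ∈ admissibleGluings M e ↔
    IsGluing M e x y x' y' ∧ (MeetsEnd M e x y x' y' → MeetsStart M e x y x' y') := by
  simp only [admissibleGluings, mem_filter_univ]

theorem gluingOfTriple_mem (hc : IsCycleColoring c M) (he : e < Fintype.card α) {t : Fin 3 → α}
    (ht : (c ∘ t).Bijective) : gluingOfTriple c M e t ∈ admissibleGluings M e := by
  obtain ⟨h01, h02, h12⟩ := bijective_comp_iff.1 ht
  rw [gluingOfTriple]
  split_ifs with h <;> rw [mem_admissibleGluings]
  · have hp := hc.color_pow_apply_ne h01 h02 h12 e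
    have hg := (hc.isGluing_iff_of_third_right h01 h02 h12 he hp).2 ⟨h, rfl⟩
    exact ⟨hg, fun hend => absurd hend (hc.not_meetsEnd_of_third_right he h01 h02 h12 hp hg)⟩
  · have hcard := card_fiber_add h01 h02 h12
    have hp := hc.color_pow_apply_ne h12.symm h02.symm h01.symm (e - #(fiber c (c (t 0))))
    have hg := (hc.isGluing_iff_of_third_left h12.symm h02.symm h01.symm he hp).2 ⟨by omega, rfl⟩
    exact ⟨hg, fun _ => (hc.meetsStart_iff_of_third_left he h12.symm h02.symm h01.symm hp hg).2
      (not_lt.1 h)⟩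

theorem leftInvOn_tripleOfGluing (hc : IsCycleColoring c M) :
    Set.LeftInvOn (tripleOfGluing c) (gluingOfTriple c M e) {t | (c ∘ t).Bijective} := by
  intro t ht
  obtain ⟨h01, h02, h12⟩ := bijective_comp_iff.1 ht
  rw [gluingOfTriple]
  split_ifs with h
  · rw [tripleOfGluing, if_neg (not_or.2 ⟨h02.symm, h12.symm⟩)]
    exact FinVec.etaExpand_eq t
  · have hthird : ∀ i j k l : Fin 3, i ≠ j → i ≠ k → j ≠ k → l ≠ i → l = k ∨ l = j := by decide
    rw [tripleOfGluing, if_pos (hthird _ _ _ _ h01 h02 h12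
      (hc.color_pow_apply_ne h12.symm h02.symm h01.symm _))]
    exact FinVec.etaExpand_eq t

theorem exists_gluingOfTriple_eq (hc : IsCycleColoring c M) (he : e < Fintype.card α)
    {q : α × α × α × α} (hq : q ∈ admissibleGluings M e) :
    ∃ t : Fin 3 → α, (c ∘ t).Bijective ∧ gluingOfTriple c M e t = q := by
  obtain ⟨x, y, x', y'⟩ := q
  obtain ⟨hg, himp⟩ := mem_admissibleGluings.1 hq
  obtain ⟨hxy, ⟨hxr, hyr, hp⟩ | ⟨hxr, hyr, hp⟩⟩ := colors_of_isCycleOn_glue hc hg.isCycleOn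
  · obtain ⟨hre, rfl⟩ := (hc.isGluing_iff_of_third_right hxy hxr hyr he hp).1 hg
    exact ⟨![x, y, y'], bijective_comp_iff.2 ⟨hxy, hxr, hyr⟩, if_pos hre⟩
  · have hx := (hc.meetsStart_iff_of_third_left he hxy hxr hyr hp hg).1
      (himp (hc.meetsEnd_of_third_left he hxy hxr hyr hp hg))
    obtain ⟨-, rfl⟩ := (hc.isGluing_iff_of_third_left hxy hxr hyr he hp).1 hg
    exact ⟨![x', y, x], bijective_comp_iff.2 ⟨hyr.symm, hxr.symm, hxy.symm⟩, if_neg hx.not_gt⟩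

theorem card_admissibleGluings (hc : IsCycleColoring c M) (he : e < Fintype.card α) :
    #(admissibleGluings M e) = 6 * ∏ i, #(fiber c i) := by
  classical
  rw [show (6 : ℕ) = (Fintype.card (Fin 3)).factorial from rfl, ← card_bijective_comp]
  refine (card_nbij (gluingOfTriple c M e) ?_ ?_ ?_).symm
  · exact fun t ht => gluingOfTriple_mem hc he ((mem_filter_univ t).1 ht)
  · rw [coe_filter_univ]
    exact (leftInvOn_tripleOfGluing hc).injOn
  · intro q hq
    obtain ⟨t, ht, rfl⟩ := exists_gluingOfTriple_eq hc he hq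
    exact ⟨t, mem_coe.2 ((mem_filter_univ t).2 ht), rfl⟩

end AdmissibleGluings

/-! ### The permutations along a traversal -/

section Segment

variable {α : Type*} [DecidableEq α] {d : ℕ} {w : Perm (Fin (d + 1))} {v : ℕ → α}
  {a b j m n t : ℕ}

/-- The periodic sequence of the transpositions along the sequence of vertices `v`, in which only
the edges at the positions `a, …, b - 1` are kept. -/
def segment (w : Perm (Fin (d + 1))) (v : ℕ → α) (a b t : ℕ) : Perm α :=
  if a ≤ clock w t ∧ clock w t < b then swap (v (clock w t)) (v (clock w t + 1)) else 1

theorem segment_periodic (w : Perm (Fin (d + 1))) (v : ℕ → α) (a b : ℕ) :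
    Function.Periodic (segment w v a b) (d + 1) := fun t => by
  rw [segment, segment, clock_periodic]

theorem segment_of_clock_eq (ht : clock w t = n) (ha : a ≤ n) (hb : n < b) :
    segment w v a b t = swap (v n) (v (n + 1)) := by
  rw [segment, ht, if_pos ⟨ha, hb⟩]

theorem segment_of_not (ht : ¬ (a ≤ clock w t ∧ clock w t < b)) : segment w v a b t = 1 :=
  if_neg ht

theorem segment_comp (τ : Perm α) : segment w (τ ∘ v) a b t = τ * segment w v a b t * τ⁻¹ := by
  rw [segment, segment]
  split_ifs
  · rw [Function.comp_apply, Function.comp_apply, swap_apply_apply]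
  · rw [mul_one, mul_inv_cancel]

theorem flow_segment_comp (τ : Perm α) (a b t : ℕ) :
    flow (segment w (τ ∘ v) a b) t = τ * flow (segment w v a b) t * τ⁻¹ := by
  rw [← flow_conj]
  exact congrArg (flow · t) (funext fun s => segment_comp τ)

theorem segment_congr {v' : ℕ → α} (hv : ∀ j, a ≤ j → j ≤ b → v j = v' j) :
    segment w v a b = segment w v' a b := by
  funext t
  rw [segment, segment]
  split_ifs with h
  · rw [hv _ h.1 h.2.le, hv _ (by omega) (by omega)]
  · rfl

theorem clock_visitTime_mod (hn : n ≤ d) : clock w (visitTime w n % (d + 1)) = n :=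
  ((clock_eq_iff w).2 (Nat.mod_modEq _ _)).trans (clock_visitTime w hn)

theorem ne_of_clock_eq {s : ℕ} (hs : s < d + 1) (ht : t < d + 1) (htn : clock w t = n)
    (hst : s ≠ t) : clock w s ≠ n := fun hsn =>
  hst (((clock_eq_iff w).1 (hsn.trans htn.symm)).eq_of_lt_of_lt hs ht)

theorem flow_segment_succ (hn : n ≤ d) (ha : a ≤ n) :
    flow (segment w v a (n + 1)) (d + 1) = flow (segment w v a n) (d + 1) *
      swap ((flow (segment w v a n) (visitTime w n % (d + 1))).symm (v n))
        ((flow (segment w v a n) (visitTime w n % (d + 1))).symm (v (n + 1))) := by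
  have hclock := clock_visitTime_mod (w := w) hn
  have hlt : visitTime w n % (d + 1) < d + 1 := Nat.mod_lt _ d.succ_pos
  have hrest : ∀ s < d + 1, s ≠ visitTime w n % (d + 1) →
      segment w v a (n + 1) s = segment w v a n s := by
    intro s hs hne
    have := ne_of_clock_eq hs hlt hclock hne
    rw [segment, segment]
    exact if_congr (by omega) rfl rfl
  rw [flow_insert hlt (segment_of_not (by omega)) hrest,
    segment_of_clock_eq hclock ha n.lt_succ_self]
  exact congrArg _ (swap_apply_apply (flow _ _)⁻¹ _ _).symm

theorem flow_segment_zero (hb : 0 < b) :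
    flow (segment w v 0 b) (d + 1) = flow (segment w v 1 b) (d + 1) * swap (v 0) (v 1) := by
  have hclock : clock w 0 = 0 := clock_visitTime w d.zero_le
  have hrest : ∀ s < d + 1, s ≠ 0 → segment w v 0 b s = segment w v 1 b s := by
    intro s hs hne
    have := ne_of_clock_eq hs d.succ_pos hclock hne
    rw [segment, segment]
    exact if_congr (by omega) rfl rfl
  rw [flow_insert d.succ_pos (segment_of_not (by omega)) hrest,
    segment_of_clock_eq hclock le_rfl hb, flow, inv_one, one_mul, mul_one]

theorem flow_segment_apply_of_notMem {x : α} (hx : ∀ j, a ≤ j → j ≤ b → v j ≠ x) (t : ℕ) :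
    flow (segment w v a b) t x = x := by
  refine flow_apply_of_fixed t.zero_le rfl fun s _ _ => ?_
  rw [segment]
  split_ifs with h
  · exact swap_apply_of_ne_of_ne (hx _ h.1 h.2.le).symm (hx _ (by omega) (by omega)).symm
  · rfl

theorem isCycleOn_flow_segment (hv : Set.InjOn v (Set.Icc 1 d)) (hn : 1 ≤ n) (hnd : n ≤ d) :
    (flow (segment w v 1 n) (d + 1)).IsCycleOn (((Icc 1 n).image v : Finset α) : Set α) := by
  induction n, hn using Nat.le_induction with
  | base =>
    rw [Icc_self, image_singleton, coe_singleton, Perm.isCycleOn_singleton]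
    exact flow_apply_of_fixed (Nat.zero_le _) rfl fun s _ _ => by
      rw [segment_of_not (by omega), Perm.one_apply]
  | succ n hn ih =>
    have hnew : ∀ j, 1 ≤ j → j ≤ n → v j ≠ v (n + 1) := fun j hj hjn h => by
      have := hv ⟨hj, by omega⟩ ⟨by omega, hnd⟩ h
      omega
    have hfix := flow_segment_apply_of_notMem (w := w) hnew
    have hend : (flow (segment w v 1 n) (visitTime w n % (d + 1))).symm (v n) ∈
        (Icc 1 n).image v := by
      by_contra h
      have := flow_segment_apply_of_notMem (w := w) (fun j hj hjn hx =>
        h (mem_image.2 ⟨j, mem_Icc.2 ⟨hj, hjn⟩, hx⟩)) (visitTime w n % (d + 1))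
      rw [apply_symm_apply] at this
      exact h (this ▸ mem_image_of_mem v (mem_Icc.2 ⟨hn, le_rfl⟩))
    rw [flow_segment_succ (by omega) hn, (symm_apply_eq _).2 (hfix _).symm,
      ← insert_Icc_right_eq_Icc_add_one (by omega), image_insert, insert_eq, union_comm]
    refine isCycleOn_union_mul_swap (ih (by omega)) ?_ ?_ hend (mem_singleton_self _)
    · rw [coe_singleton, Perm.isCycleOn_singleton, hfix]
    · rw [disjoint_singleton_right, mem_image]
      rintro ⟨j, hj, h⟩
      exact hnew j (mem_Icc.1 hj).1 (mem_Icc.1 hj).2 h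

theorem segment_apply_vertex (hv : Set.InjOn v (Set.Icc 1 d)) (hm : 1 ≤ m) (hmd : m ≤ d)
    (ht : clock w t ≠ m) (ht' : clock w t + 1 ≠ m) : segment w v 1 d t (v m) = v m := by
  rw [segment]
  split_ifs with h
  · refine swap_apply_of_ne_of_ne (fun hmt => ht ?_) fun hmt => ht' ?_
    · exact hv ⟨h.1, h.2.le⟩ ⟨hm, hmd⟩ hmt.symm
    · exact hv ⟨by omega, by omega⟩ ⟨hm, hmd⟩ hmt.symm
  · rfl

theorem flow_segment_apply_of_start (hv : Set.InjOn v (Set.Icc 1 d)) (hj : j < d)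
    (hstart : flow (segment w v 1 d) (visitTime w j + 1) (v 1) = v (j + 1))
    (hjt : visitTime w j < t) (htj : t ≤ visitTime w (j + 1)) :
    flow (segment w v 1 d) t (v 1) = v (j + 1) := by
  have hperiod := visitTime_succ_lt w j
  refine flow_apply_of_fixed hjt hstart fun s hjs hst => ?_
  refine segment_apply_vertex hv (by omega) hj
    (clock_ne_of_lt w hj (by omega) (by omega) (by omega)) fun h => ?_
  exact clock_ne_of_lt w hj.le (by omega) (by omega) (by omega) (Nat.succ_injective h)

theorem flow_segment_visitTime_add_one (hv : Set.InjOn v (Set.Icc 1 d)) (hj : j < d) :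
    flow (segment w v 1 d) (visitTime w j + 1) (v 1) = v (j + 1) := by
  induction j with
  | zero =>
    have : clock w 0 = 0 := clock_visitTime w d.zero_le
    rw [visitTime, flow, flow, mul_one, segment_of_not (by omega), Perm.one_apply]
  | succ j ih =>
    rw [flow, Perm.mul_apply, flow_segment_apply_of_start hv (by omega) (ih (by omega))
      (visitTime_lt_succ w (by omega)) le_rfl,
      segment_of_clock_eq (clock_visitTime w hj.le) (by omega) hj, swap_apply_left]

theorem flow_segment_apply (hv : Set.InjOn v (Set.Icc 1 d)) (hj : j < d) (hjt : visitTime w j < t)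
    (htj : t ≤ visitTime w (j + 1)) : flow (segment w v 1 d) t (v 1) = v (j + 1) :=
  flow_segment_apply_of_start hv hj (flow_segment_visitTime_add_one hv hj) hjt htj

theorem flow_segment_apply_eq_iff (hv : Set.InjOn v (Set.Icc 1 d)) (ht : 0 < t)
    (htd : t ≤ visitTime w d) (hj : j < d) :
    flow (segment w v 1 d) t (v 1) = v (j + 1) ↔ visitTime w j < t ∧ t ≤ visitTime w (j + 1) := by
  refine ⟨fun h => ?_, fun h => flow_segment_apply hv hj h.1 h.2⟩
  obtain ⟨i, hi, hit⟩ := exists_visitTime_lt_le w ht htd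
  rw [flow_segment_apply hv hi hit.1 hit.2] at h
  obtain rfl := Nat.succ_injective (hv ⟨by omega, hi⟩ ⟨by omega, hj⟩ h)
  exact hit

end Segment

section Turns

variable {d : ℕ} {w : Perm (Fin (d + 1))} {j k l : ℕ}

theorem sbtw_iff_sub_val {a b c : Fin (d + 1)} :
    sbtw a b c ↔ 0 < (b - a).val ∧ (b - a).val < (c - a).val := by
  have hab := Fin.intCast_val_sub_eq_sub_add_ite b a
  have hac := Fin.intCast_val_sub_eq_sub_add_ite c a
  rw [Fin.sbtw_iff]
  simp only [Fin.lt_def, Fin.le_def] at hab hac ⊢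
  split_ifs at hab hac <;> omega

theorem sbtw_add_ofNat (a : Fin (d + 1)) {r s t : ℕ} (hrs : r < s) (hst : s < t)
    (htr : t < r + (d + 1)) :
    sbtw (a + Fin.ofNat (d + 1) r) (a + Fin.ofNat (d + 1) s) (a + Fin.ofNat (d + 1) t) := by
  obtain ⟨m, rfl⟩ := Nat.exists_eq_add_of_lt hrs
  obtain ⟨n, rfl⟩ := Nat.exists_eq_add_of_lt hst
  rw [sbtw_iff_sub_val]
  simp only [add_assoc r, ofNat_add r, ← add_assoc a, add_sub_cancel_left, Fin.val_ofNat]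
  rw [Nat.mod_eq_of_lt (by omega), Nat.mod_eq_of_lt (by omega)]
  omega

theorem exists_time_of_sbtw {r : Fin (d + 1)} (h : sbtw (edgeSeq w j) r (edgeSeq w (j + 1))) :
    ∃ t, visitTime w j < t ∧ t < visitTime w (j + 1) ∧ w 0 + Fin.ofNat (d + 1) t = r := by
  rw [sbtw_iff_sub_val] at h
  refine ⟨visitTime w j + (r - edgeSeq w j).val, by omega, Nat.add_lt_add_left h.2 _, ?_⟩
  rw [ofNat_add, ← add_assoc, edge_visitTime, Fin.ofNat_val_eq_self, add_sub_cancel]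

theorem sbtw_edge_of_time {t : ℕ} (hj : visitTime w j < t) (ht : t < visitTime w (j + 1)) :
    sbtw (edgeSeq w j) (w 0 + Fin.ofNat (d + 1) t) (edgeSeq w (j + 1)) := by
  rw [← edge_visitTime w j, ← edge_visitTime w (j + 1)]
  exact sbtw_add_ofNat (w 0) hj ht (visitTime_succ_lt w j)

/-- The number of full periods which elapse before the last edge of the traversal `w` is applied. -/
def fullTurns (w : Perm (Fin (d + 1))) : ℕ := visitTime w d / (d + 1)

theorem mod_add_fullTurns_mul : visitTime w d % (d + 1) + fullTurns w * (d + 1) = visitTime w d :=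
  Nat.mod_add_div' _ _

theorem fullTurns_lt (hd : 0 < d) : fullTurns w < d :=
  Nat.div_lt_of_lt_mul ((visitTime_le w d).trans_lt (by nlinarith))

theorem add_ofNat_mul (a : Fin (d + 1)) (i : ℕ) : a + Fin.ofNat (d + 1) (i * (d + 1)) = a := by
  rw [show Fin.ofNat (d + 1) (i * (d + 1)) = 0 from Fin.ext (Nat.mul_mod_left i _), add_zero]

theorem add_ofNat_visitTime_mod (w : Perm (Fin (d + 1))) (i : ℕ) :
    w 0 + Fin.ofNat (d + 1) (visitTime w d % (d + 1) + i * (d + 1)) = edgeSeq w d := by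
  rw [ofNat_add, ← add_assoc, add_ofNat_mul, ← edge_visitTime]
  exact congrArg _ (Fin.ext (Nat.mod_mod _ _))

theorem visitTime_mod_pos (w : Perm (Fin (d + 1))) (hd : 0 < d) :
    0 < visitTime w d % (d + 1) := Nat.pos_of_ne_zero fun h => by
  have := clock_visitTime_mod (w := w) le_rfl
  rw [h, show clock w 0 = 0 from clock_visitTime w d.zero_le] at this
  omega

theorem turnsAtStart_iff (hk : 1 ≤ k) (hkd : k ≤ d) : TurnsAtStart k (edgeSeq w) ↔
    ∃ i ≤ fullTurns w, visitTime w (k - 1) < i * (d + 1) ∧ i * (d + 1) ≤ visitTime w k := by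
  obtain ⟨k, rfl⟩ := Nat.exists_eq_add_of_le' hk
  rw [TurnsAtStart, Nat.add_sub_cancel, show edgeSeq w 0 = w 0 from rfl]
  constructor
  · intro h
    obtain ⟨t, hkt, htk, ht⟩ := exists_time_of_sbtw h
    have hclock : clock w t = clock w 0 := by
      rw [clock_eq_of_edge w d.zero_le ht, clock_eq_of_edge w d.zero_le (add_zero (w 0))]
    obtain ⟨i, rfl⟩ := Nat.modEq_zero_iff_dvd.1 ((clock_eq_iff w).1 hclock)
    rw [mul_comm] at hkt htk
    exact ⟨i, (Nat.le_div_iff_mul_le d.succ_pos).2 (htk.le.trans (visitTime_mono w hkd)),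
      hkt, htk.le⟩
  · rintro ⟨i, -, hki, hik⟩
    rw [← add_ofNat_mul (w 0) i]
    refine sbtw_edge_of_time hki (hik.lt_of_ne fun h => ?_)
    have := clock_eq_of_edge w d.zero_le (add_ofNat_mul (w 0) i)
    rw [h, clock_visitTime w hkd] at this
    omega

theorem turnsAtEnd_iff (hl : 1 ≤ l) (hld : l < d) : TurnsAtEnd d l (edgeSeq w) ↔
    ∃ i < fullTurns w, visitTime w (l - 1) < visitTime w d % (d + 1) + i * (d + 1) ∧
      visitTime w d % (d + 1) + i * (d + 1) ≤ visitTime w l := by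
  obtain ⟨l, rfl⟩ := Nat.exists_eq_add_of_le' hl
  rw [TurnsAtEnd, Nat.add_sub_cancel]
  constructor
  · intro h
    obtain ⟨t, hlt, htl, ht⟩ := exists_time_of_sbtw h
    have hmod : t % (d + 1) = visitTime w d % (d + 1) :=
      (clock_eq_iff w).1 ((clock_eq_of_edge w le_rfl ht).trans (clock_visitTime w le_rfl).symm)
    have hdiv := Nat.mod_add_div' t (d + 1)
    have htd := htl.trans_le (visitTime_mono w hld.le)
    rw [hmod] at hdiv
    refine ⟨t / (d + 1), lt_of_mul_lt_mul_right (a := d + 1) ?_ (Nat.zero_le _), by omega, by omega⟩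
    have := mod_add_fullTurns_mul (w := w)
    omega
  · rintro ⟨i, -, hli, hil⟩
    rw [← add_ofNat_visitTime_mod w i]
    refine sbtw_edge_of_time hli (hil.lt_of_ne fun h => ?_)
    have := clock_eq_of_edge w le_rfl (add_ofNat_visitTime_mod w i)
    rw [h, clock_visitTime w hld.le] at this
    omega

end Turns

section Conjugation

variable {α : Type*} {Q Q' : Perm α} {x x' : α}

theorem exists_pow_apply_eq [Finite α] (hQ : Q.IsCycleOn Set.univ) (x y : α) :
    ∃ n : ℕ, (Q ^ n) x = y :=
  hQ.exists_pow_eq' Set.finite_univ (Set.mem_univ x) (Set.mem_univ y)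

theorem exists_conj_eq [Finite α] (hQ : Q.IsCycleOn Set.univ) (hQ' : Q'.IsCycleOn Set.univ)
    (x x' : α) : ∃ τ : Perm α, τ x = x' ∧ τ * Q * τ⁻¹ = Q' := by
  have := Fintype.ofFinite α
  choose n hn using exists_pow_apply_eq hQ x
  rw [← coe_univ] at hQ hQ'
  have hpow (m n : ℕ) : (Q ^ m) x = (Q ^ n) x ↔ (Q' ^ m) x' = (Q' ^ n) x' := by
    rw [hQ.pow_apply_eq_pow_apply (mem_univ x), hQ'.pow_apply_eq_pow_apply (mem_univ x')]
  have hτ (m : ℕ) : (Q' ^ n ((Q ^ m) x)) x' = (Q' ^ m) x' := (hpow _ _).1 (hn _)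
  have hinj : Function.Injective fun z => (Q' ^ n z) x' := fun z z' h => by
    rw [← hn z, ← hn z', hpow]
    exact h
  refine ⟨ofBijective _ (Finite.injective_iff_bijective.1 hinj), hτ 0, ?_⟩
  rw [mul_inv_eq_iff_eq_mul]
  ext z
  rw [Perm.mul_apply, Perm.mul_apply, ofBijective_apply, ofBijective_apply, ← Perm.mul_apply,
    ← pow_succ', ← hτ (n z + 1), pow_succ', Perm.mul_apply, hn]

theorem eq_one_of_conj_eq [Finite α] (hQ : Q.IsCycleOn Set.univ) {τ : Perm α}
    (hτ : τ * Q * τ⁻¹ = Q) (hx : τ x = x) : τ = 1 := by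
  ext y
  obtain ⟨n, rfl⟩ := exists_pow_apply_eq hQ x y
  have hcomm : τ * Q ^ n = Q ^ n * τ :=
    Commute.pow_right (mul_inv_eq_iff_eq_mul.1 hτ) n
  rw [← Perm.mul_apply, hcomm, Perm.mul_apply, hx, Perm.one_apply]

end Conjugation

section Ends

variable {α : Type*} {d k l j : ℕ} {w : Perm (Fin (d + 1))} {v v' : ℕ → α}

theorem exists_eq_vertex [Fintype α] (hα : Fintype.card α = d) (hv : Set.InjOn v (Set.Icc 1 d))
    (x : α) : ∃ j, 1 ≤ j ∧ j ≤ d ∧ v j = x := by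
  classical
  have himage : (Icc 1 d).image v = univ := by
    rw [← card_eq_iff_eq_univ, card_image_of_injOn (by rwa [coe_Icc]), Nat.card_Icc,
      Nat.add_sub_cancel, hα]
  obtain ⟨j, hj, hjx⟩ := mem_image.1 (himage ▸ mem_univ x)
  exact ⟨j, (mem_Icc.1 hj).1, (mem_Icc.1 hj).2, hjx⟩

theorem exists_perm_vertices [Fintype α] (hα : Fintype.card α = d) (hv : Set.InjOn v (Set.Icc 1 d))
    (hv' : Set.InjOn v' (Set.Icc 1 d)) : ∃ τ : Perm α, ∀ j, 1 ≤ j → j ≤ d → τ (v j) = v' j := by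
  choose index hpos hle hindex using exists_eq_vertex hα hv
  have hinj : Function.Injective fun x => v' (index x) := fun x y hxy => by
    rw [← hindex x, hv' ⟨hpos x, hle x⟩ ⟨hpos y, hle y⟩ hxy, hindex]
  refine ⟨ofBijective _ (Finite.injective_iff_bijective.1 hinj), fun j hj hjd => ?_⟩
  rw [ofBijective_apply, hv ⟨hpos _, hle _⟩ ⟨hj, hjd⟩ (hindex (v j))]

variable [DecidableEq α]

theorem isCycleOn_flow_segment_univ [Fintype α] (hα : Fintype.card α = d) (hd : 1 ≤ d)
    (hv : Set.InjOn v (Set.Icc 1 d)) : (flow (segment w v 1 d) (d + 1)).IsCycleOn Set.univ := by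
  convert! isCycleOn_flow_segment (w := w) hv hd le_rfl
  refine (Set.eq_univ_of_forall fun x => ?_).symm
  obtain ⟨j, hj, hjd, rfl⟩ := exists_eq_vertex hα hv x
  exact mem_image_of_mem v (mem_Icc.2 ⟨hj, hjd⟩)

/-- The two transpositions at which the full product of the transpositions along `v` differs from
that of the inner ones, in the order of the points expected by `IsGluing`. -/
def gluingOfVertices (w : Perm (Fin (d + 1))) (v : ℕ → α) : α × α × α × α :=
  let τ := flow (segment w v 1 d) (visitTime w d % (d + 1))
  (v 1, v 0, τ.symm (v d), τ.symm (v (d + 1)))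

theorem gluingOfVertices_congr (hd : 1 ≤ d) (hv : ∀ j ≤ d + 1, v j = v' j) :
    gluingOfVertices w v = gluingOfVertices w v' := by
  rw [gluingOfVertices, gluingOfVertices, segment_congr fun j _ hj => hv j (by omega),
    hv 0 (by omega), hv 1 (by omega), hv d (by omega), hv (d + 1) le_rfl]

theorem flow_segment_full (hd : 1 ≤ d) : flow (segment w v 0 (d + 1)) (d + 1) =
    flow (segment w v 1 d) (d + 1) *
      swap (gluingOfVertices w v).2.2.1 (gluingOfVertices w v).2.2.2 * swap (v 0) (v 1) := by
  rw [flow_segment_zero d.succ_pos, flow_segment_succ le_rfl hd, gluingOfVertices]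

theorem glue_gluingOfVertices (hd : 1 ≤ d) :
    glue (flow (segment w v 0 (d + 1)) (d + 1)) (v 1) (v 0) (gluingOfVertices w v).2.2.1
      (gluingOfVertices w v).2.2.2 = flow (segment w v 1 d) (d + 1) := by
  rw [glue, flow_segment_full hd, swap_comm (v 0), mul_swap_mul_self, mul_swap_mul_self]

theorem pow_flow_segment_apply_eq_iff (hv : Set.InjOn v (Set.Icc 1 d)) (hj : j < d) {i : ℕ}
    (hi : 0 < i) (hile : i ≤ fullTurns w) :
    (flow (segment w v 1 d) (d + 1) ^ i) (v 1) = v (j + 1) ↔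
      visitTime w j < i * (d + 1) ∧ i * (d + 1) ≤ visitTime w (j + 1) := by
  have hpow := flow_add_mul_period (segment_periodic w v 1 d) 0 i
  rw [Nat.zero_add, flow, one_mul] at hpow
  rw [← hpow]
  exact flow_segment_apply_eq_iff hv (by positivity)
    ((Nat.le_div_iff_mul_le d.succ_pos).1 hile) hj

theorem pow_flow_segment_apply_eq_symm_iff (hv : Set.InjOn v (Set.Icc 1 d)) (hj : j < d) {i : ℕ}
    (hi : i ≤ fullTurns w) :
    (flow (segment w v 1 d) (d + 1) ^ i) (v 1) =
        (flow (segment w v 1 d) (visitTime w d % (d + 1))).symm (v (j + 1)) ↔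
      visitTime w j < visitTime w d % (d + 1) + i * (d + 1) ∧
        visitTime w d % (d + 1) + i * (d + 1) ≤ visitTime w (j + 1) := by
  have hpos := visitTime_mod_pos w (by omega)
  rw [eq_symm_apply, ← Perm.mul_apply, ← flow_add_mul_period (segment_periodic w v 1 d)]
  refine flow_segment_apply_eq_iff hv (by omega) ?_ hj
  exact (Nat.add_le_add_left (Nat.mul_le_mul_right _ hi) _).trans_eq mod_add_fullTurns_mul

theorem isGluing_gluingOfVertices [Fintype α] (hα : Fintype.card α = d) (hd : 1 ≤ d)
    (hv : Set.InjOn v (Set.Icc 1 d)) :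
    IsGluing (flow (segment w v 0 (d + 1)) (d + 1)) (fullTurns w) (v 1) (v 0)
      (gluingOfVertices w v).2.2.1 (gluingOfVertices w v).2.2.2 := by
  refine ⟨?_, ?_⟩ <;> rw [glue_gluingOfVertices hd]
  · exact isCycleOn_flow_segment_univ hα hd hv
  · obtain ⟨n, rfl⟩ := Nat.exists_eq_add_of_le' hd
    refine (pow_flow_segment_apply_eq_symm_iff hv n.lt_succ_self le_rfl).2 ?_
    rw [mod_add_fullTurns_mul]
    exact ⟨visitTime_lt_succ w n.lt_succ_self, le_rfl⟩

theorem meetsStart_iff_turnsAtStart (hv : Set.InjOn v (Set.Icc 1 d)) (hk : 1 ≤ k) (hkd : k ≤ d)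
    (h01 : v 0 ≠ v 1) (h0k : v 0 = v k) :
    MeetsStart (flow (segment w v 0 (d + 1)) (d + 1)) (fullTurns w) (v 1) (v 0)
      (gluingOfVertices w v).2.2.1 (gluingOfVertices w v).2.2.2 ↔ TurnsAtStart k (edgeSeq w) := by
  obtain ⟨k, rfl⟩ := Nat.exists_eq_add_of_le' hk
  rw [turnsAtStart_iff hk hkd, MeetsStart, glue_gluingOfVertices (hk.trans hkd)]
  refine exists_congr fun i => and_congr_right fun hi => ?_
  obtain rfl | hpos := i.eq_zero_or_pos
  · rw [pow_zero, Perm.one_apply, iff_false_intro h01.symm, zero_mul]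
    exact iff_of_false id fun h => Nat.not_lt_zero _ h.1
  · rw [h0k]
    exact pow_flow_segment_apply_eq_iff hv hkd hpos hi

theorem meetsEnd_iff_turnsAtEnd (hv : Set.InjOn v (Set.Icc 1 d)) (hl : 1 ≤ l) (hld : l < d)
    (hvl : v (d + 1) = v l) :
    MeetsEnd (flow (segment w v 0 (d + 1)) (d + 1)) (fullTurns w) (v 1) (v 0)
      (gluingOfVertices w v).2.2.1 (gluingOfVertices w v).2.2.2 ↔ TurnsAtEnd d l (edgeSeq w) := by
  rw [turnsAtEnd_iff hl hld, MeetsEnd, glue_gluingOfVertices (by omega)]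
  refine exists_congr fun i => and_congr_right fun hi => ?_
  obtain ⟨l, rfl⟩ := Nat.exists_eq_add_of_le' hl
  rw [gluingOfVertices, hvl]
  exact pow_flow_segment_apply_eq_symm_iff hv (by omega) hi.le

end Ends

section Vertices

variable {α : Type*} [DecidableEq α] [Fintype α] {d : ℕ} {w : Perm (Fin (d + 1))} {v v' : ℕ → α}
  {M Q : Perm α} {x y x' y' : α}

theorem exists_vertices_of_isCycleOn (hα : Fintype.card α = d) (hQ : Q.IsCycleOn Set.univ)
    (w : Perm (Fin (d + 1))) (x : α) :
    ∃ v, Set.InjOn v (Set.Icc 1 d) ∧ v 1 = x ∧ flow (segment w v 1 d) (d + 1) = Q := by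
  have hd : 1 ≤ d := hα ▸ Fintype.card_pos_iff.2 ⟨x⟩
  let v (j : ℕ) : α := if h : j - 1 < d then (Fintype.equivFinOfCardEq hα).symm ⟨j - 1, h⟩ else x
  have hv : Set.InjOn v (Set.Icc 1 d) := by
    rintro i ⟨hi, hid⟩ j ⟨hj, hjd⟩ hij
    simp only [v, dif_pos (show i - 1 < d by omega), dif_pos (show j - 1 < d by omega),
      EmbeddingLike.apply_eq_iff_eq, Fin.mk.injEq] at hij
    omega
  obtain ⟨τ, hτ, hτQ⟩ := exists_conj_eq (isCycleOn_flow_segment_univ (w := w) hα hd hv) hQ (v 1) x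
  exact ⟨τ ∘ v, τ.injective.comp_injOn hv, hτ, (flow_segment_comp τ 1 d _).trans hτQ⟩

theorem vertices_eq_of_flow_segment_eq (hα : Fintype.card α = d) (hd : 1 ≤ d)
    (hv : Set.InjOn v (Set.Icc 1 d)) (hv' : Set.InjOn v' (Set.Icc 1 d)) (h1 : v 1 = v' 1)
    (hQ : flow (segment w v 1 d) (d + 1) = flow (segment w v' 1 d) (d + 1)) {j : ℕ} (hj : 1 ≤ j)
    (hjd : j ≤ d) : v j = v' j := by
  obtain ⟨τ, hτ⟩ := exists_perm_vertices hα hv hv'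
  rw [← segment_congr hτ] at hQ
  have hone : τ = 1 := eq_one_of_conj_eq (isCycleOn_flow_segment_univ (w := w) hα hd hv)
    ((flow_segment_comp τ 1 d _).symm.trans hQ.symm) ((hτ 1 le_rfl hd).trans h1.symm)
  rw [← hτ j hj hjd, hone, Perm.one_apply]

theorem exists_vertices_of_isGluing (hα : Fintype.card α = d) (w : Perm (Fin (d + 1)))
    (h : IsGluing M (fullTurns w) x y x' y') :
    ∃ v, Set.InjOn v (Set.Icc 1 d) ∧ gluingOfVertices w v = (x, y, x', y') ∧
      flow (segment w v 0 (d + 1)) (d + 1) = M := by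
  have hd : 1 ≤ d := hα ▸ Fintype.card_pos_iff.2 ⟨x⟩
  obtain ⟨v, hv, rfl, hQ⟩ := exists_vertices_of_isCycleOn hα h.isCycleOn w x
  let τ := flow (segment w v 1 d) (visitTime w d % (d + 1))
  let u (j : ℕ) : α := if j = 0 then y else if j = d + 1 then τ y' else v j
  have huv (j : ℕ) (hj : 1 ≤ j) (hjd : j ≤ d) : u j = v j := by
    simp only [u, if_neg (show j ≠ 0 by omega), if_neg (show j ≠ d + 1 by omega)]
  have hu : Set.InjOn u (Set.Icc 1 d) := hv.congr fun j hj => (huv j hj.1 hj.2).symm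
  have hx' : τ.symm (v d) = x' := by
    have hend := (isGluing_gluingOfVertices (w := w) hα hd hv).pow_apply
    rw [glue_gluingOfVertices hd, hQ, h.pow_apply] at hend
    exact hend.symm
  have hgluing : gluingOfVertices w u = (v 1, y, x', y') := by
    rw [gluingOfVertices, segment_congr huv, huv 1 le_rfl hd, huv d hd le_rfl, hx']
    simp only [u, if_pos, if_neg d.succ_ne_zero, τ, symm_apply_apply]
  refine ⟨u, hu, hgluing, ?_⟩
  rw [flow_segment_full hd, hgluing, segment_congr huv, hQ, huv 1 le_rfl hd, glue,
    mul_swap_mul_self, swap_comm, show u 0 = y from if_pos rfl, mul_swap_mul_self]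

theorem vertices_eq_of_gluingOfVertices_eq (hα : Fintype.card α = d) (hd : 1 ≤ d)
    (hv : Set.InjOn v (Set.Icc 1 d)) (hv' : Set.InjOn v' (Set.Icc 1 d))
    (hM : flow (segment w v 0 (d + 1)) (d + 1) = flow (segment w v' 0 (d + 1)) (d + 1))
    (hg : gluingOfVertices w v = gluingOfVertices w v') {j : ℕ} (hj : j ≤ d + 1) : v j = v' j := by
  have h1 : v 1 = v' 1 := congrArg Prod.fst hg
  have h0 : v 0 = v' 0 := congrArg (fun q => q.2.1) hg
  have hQ := glue_gluingOfVertices (w := w) (v := v) hd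
  rw [hM, hg, h1, h0, glue_gluingOfVertices hd] at hQ
  have hinner (j : ℕ) := vertices_eq_of_flow_segment_eq (j := j) hα hd hv hv' h1 hQ.symm
  obtain rfl | hpos := j.eq_zero_or_pos
  · exact h0
  obtain hjd | rfl := Nat.le_succ_iff.1 hj
  · exact hinner j hpos hjd
  · have hend : (gluingOfVertices w v).2.2.2 = (gluingOfVertices w v').2.2.2 := by rw [hg]
    rw [gluingOfVertices, gluingOfVertices, segment_congr hinner] at hend
    exact Equiv.injective _ hend

end Vertices

section Monodromy

variable {α : Type*} [DecidableEq α] {d k l : ℕ} {σ : Fin (d + 1) → Perm α}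
  {w : Perm (Fin (d + 1))} {v : ℕ → α}

/-- The composite of all the permutations of a family in their cyclic order starting at `a`, the
later ones being applied later. -/
def monodromy (σ : Fin (d + 1) → Perm α) (a : Fin (d + 1)) : Perm α :=
  flow (fun t => σ (a + Fin.ofNat (d + 1) t)) (d + 1)

/-- The family of transpositions which is traversed by the edges `w` and the vertices `v`. -/
def transpositions (w : Perm (Fin (d + 1))) (v : ℕ → α) (i : Fin (d + 1)) : Perm α :=
  swap (v (w.symm i)) (v (w.symm i + 1))

theorem transpositions_add_ofNat (w : Perm (Fin (d + 1))) (v : ℕ → α) (t : ℕ) :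
    transpositions w v (w 0 + Fin.ofNat (d + 1) t) = segment w v 0 (d + 1) t :=
  (segment_of_clock_eq rfl (Nat.zero_le _) (Nat.lt_succ_of_le (clock_le w t))).symm

theorem monodromy_transpositions (w : Perm (Fin (d + 1))) (v : ℕ → α) :
    monodromy (transpositions w v) (w 0) = flow (segment w v 0 (d + 1)) (d + 1) :=
  congrArg (flow · (d + 1)) (funext (transpositions_add_ofNat w v))

namespace IsTraversal

theorem injOn {w : ℕ → Fin (d + 1)} (h : IsTraversal σ d k l w v) : Set.InjOn v (Set.Icc 1 d) :=
  fun i hi j hj => h.vertex_inj i hi.1 hi.2 j hj.1 hj.2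

theorem eq_transpositions (h : IsTraversal σ d k l (edgeSeq w) v) : σ = transpositions w v := by
  funext i
  rw [transpositions, ← h.step _ (w.symm i).isLt, edgeSeq_val, apply_symm_apply]

theorem monodromy_eq (h : IsTraversal σ d k l (edgeSeq w) v) :
    monodromy σ (w 0) = flow (segment w v 0 (d + 1)) (d + 1) := by
  rw [h.eq_transpositions, monodromy_transpositions]

theorem turnsAtStart_iff_meetsStart (h : IsTraversal σ d k l (edgeSeq w) v) :
    TurnsAtStart k (edgeSeq w) ↔ MeetsStart (monodromy σ (w 0)) (fullTurns w) (v 1) (v 0)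
      (gluingOfVertices w v).2.2.1 (gluingOfVertices w v).2.2.2 := by
  rw [h.monodromy_eq, meetsStart_iff_turnsAtStart h.injOn h.one_le_left h.left_le
    (h.ne 0 d.succ_pos) h.start]

theorem turnsAtEnd_iff_meetsEnd (h : IsTraversal σ d k l (edgeSeq w) v) :
    TurnsAtEnd d l (edgeSeq w) ↔ MeetsEnd (monodromy σ (w 0)) (fullTurns w) (v 1) (v 0)
      (gluingOfVertices w v).2.2.1 (gluingOfVertices w v).2.2.2 := by
  rw [h.monodromy_eq, meetsEnd_iff_turnsAtEnd h.injOn h.one_le_right h.right_lt h.finish]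

variable [Fintype α]

theorem isGluing (h : IsTraversal σ d k l (edgeSeq w) v) (hα : Fintype.card α = d) :
    IsGluing (monodromy σ (w 0)) (fullTurns w) (v 1) (v 0)
      (gluingOfVertices w v).2.2.1 (gluingOfVertices w v).2.2.2 := by
  rw [h.monodromy_eq]
  exact isGluing_gluingOfVertices hα (h.one_le_left.trans h.left_le) h.injOn

theorem le_of_turns (h : IsTraversal σ d k l (edgeSeq w) v) (hα : Fintype.card α = d)
    {c : α → Fin 3} (hc : IsCycleColoring c (monodromy σ (w 0)))
    (hs : TurnsAtStart k (edgeSeq w)) (he : TurnsAtEnd d l (edgeSeq w)) :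
    k ≤ l ∧ (k = l → sbtw (edgeSeq w (k - 1)) (edgeSeq w 0) (edgeSeq w d)) := by
  have hk := h.one_le_left
  have hkd := h.left_le
  have hl := h.one_le_right
  have hld := h.right_lt
  have hglue := glue_gluingOfVertices (w := w) (v := v) (hk.trans hkd)
  obtain ⟨i, hi, hki, hik⟩ := (turnsAtStart_iff hk hkd).1 hs
  obtain ⟨a, ha, hla, hal⟩ := (turnsAtEnd_iff hl hld).1 he
  have hia : i ≤ a := by
    refine hc.start_le_end (h.isGluing hα) ((fullTurns_lt (by omega)).trans_eq hα.symm) hi ?_ ha ?_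
    · rw [h.monodromy_eq, hglue, h.start, ← Nat.sub_add_cancel hk, pow_flow_segment_apply_eq_iff
        h.injOn (by omega) (Nat.pos_of_lt_mul_right hki) hi, Nat.sub_add_cancel hk]
      exact ⟨hki, hik⟩
    · rw [h.monodromy_eq, hglue, gluingOfVertices, h.finish, ← Nat.sub_add_cancel hl,
        pow_flow_segment_apply_eq_symm_iff h.injOn (by omega) ha.le, Nat.sub_add_cancel hl]
      exact ⟨hla, hal⟩
  have htime : i * (d + 1) < visitTime w d % (d + 1) + a * (d + 1) :=
    lt_add_of_pos_of_le (visitTime_mod_pos w (by omega)) (Nat.mul_le_mul_right _ hia)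
  refine ⟨?_, ?_⟩
  · have := (visitTime_mono w).reflect_lt (hki.trans (htime.trans_le hal))
    omega
  · rintro rfl
    have hperiod := visitTime_succ_lt w (k - 1)
    rw [Nat.sub_add_cancel hk] at hperiod
    rw [← edge_visitTime w (k - 1), show edgeSeq w 0 = w 0 from rfl,
      ← add_ofNat_visitTime_mod w a]
    nth_rw 2 [← add_ofNat_mul (w 0) i]
    exact sbtw_add_ofNat (w 0) hki htime (hal.trans_lt hperiod)

end IsTraversal

theorem exists_isTraversal_transpositions [Fintype α] (hα : Fintype.card α = d)
    (hv : Set.InjOn v (Set.Icc 1 d)) (h0 : v 0 ≠ v 1) (hd : v d ≠ v (d + 1)) :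
    ∃ k l, IsTraversal (transpositions w v) d k l (edgeSeq w) v := by
  obtain ⟨k, hk, hkd, hvk⟩ := exists_eq_vertex hα hv (v 0)
  obtain ⟨l, hl, hld, hvl⟩ := exists_eq_vertex hα hv (v (d + 1))
  have hsymm {j : ℕ} (hj : j < d + 1) : (w.symm (edgeSeq w j) : ℕ) = j := by
    rw [edgeSeq, symm_apply_apply, Fin.val_ofNat, Nat.mod_eq_of_lt hj]
  refine ⟨k, l, ⟨⟨fun j hj => ?_, fun j hj => ?_, fun i hi j hj hij => ?_,
    fun i hi hid j hj hjd => @hv i ⟨hi, hid⟩ j ⟨hj, hjd⟩⟩, hk, hkd, hvk.symm, hl, hld, hvl.symm⟩⟩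
  · rw [transpositions, hsymm hj]
  · obtain rfl | hpos := j.eq_zero_or_pos
    · exact h0
    obtain rfl | hjd := Nat.eq_or_lt_of_le (Nat.le_of_lt_succ hj)
    · exact hd
    · exact fun h => by have := hv ⟨hpos, hjd.le⟩ ⟨by omega, hjd⟩ h; omega
  · rw [← hsymm hi, ← hsymm hj, hij]

end Monodromy

/-! ### Counting factorisations -/

section Count

variable {α : Type*} [DecidableEq α] [Fintype α] {d : ℕ} {σ : Fin (d + 1) → Perm α}
  {w : Perm (Fin (d + 1))} {v : Fin (d + 2) → α} {c : α → Fin 3} {M : Perm α}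

theorem isNoncrossing_of_monodromy (hα : Fintype.card α = d)
    (hσ : ∀ a, ∃ c : α → Fin 3, IsCycleColoring c (monodromy σ a)) : IsNoncrossing σ d := by
  intro k l w v h hs he
  have hkd := h.left_le
  have hld := h.right_lt
  obtain ⟨p, hw, hv⟩ := h.exists_tour
  obtain ⟨c, hc⟩ := hσ (p.1 0)
  rw [TurnsAtStart, ← hw _ (by omega), ← hw 0 (by omega), ← hw k hkd] at hs
  rw [TurnsAtEnd, ← hw _ (by omega), ← hw d le_rfl, ← hw l hld.le] at he
  rw [← hw _ (by omega), ← hw 0 (by omega), ← hw d le_rfl]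
  exact (h.congr hw hv).le_of_turns hα hc hs he

open scoped Classical in
/-- The vertices of the admissible traversals with edges `w` of the families of transpositions
whose monodromy from `a` is `M`. -/
noncomputable def admissibleVertices (M : Perm α) (a : Fin (d + 1)) (w : Perm (Fin (d + 1))) :
    Finset (Fin (d + 2) → α) :=
  {v | (w, v) ∈ tours (transpositions w (vertexSeq v)) (fun s e => e → s) ∧
    monodromy (transpositions w (vertexSeq v)) a = M}

theorem mem_admissibleVertices {a : Fin (d + 1)} : v ∈ admissibleVertices M a w ↔
    (w, v) ∈ tours (transpositions w (vertexSeq v)) (fun s e => e → s) ∧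
      monodromy (transpositions w (vertexSeq v)) a = M := by
  rw [admissibleVertices, mem_filter_univ]

theorem mem_admissibleVertices_iff (hα : Fintype.card α = d) (hc : IsCycleColoring c M) :
    v ∈ admissibleVertices M (w 0) w ↔
      Set.InjOn (vertexSeq v) (Set.Icc 1 d) ∧
      flow (segment w (vertexSeq v) 0 (d + 1)) (d + 1) = M ∧
      gluingOfVertices w (vertexSeq v) ∈ admissibleGluings M (fullTurns w) := by
  rw [mem_admissibleVertices, mem_tours, monodromy_transpositions]
  constructor
  · rintro ⟨⟨k, l, h, hadm⟩, hM⟩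
    rw [h.turnsAtStart_iff_meetsStart, h.turnsAtEnd_iff_meetsEnd, monodromy_transpositions, hM]
      at hadm
    have hg := h.isGluing hα
    rw [monodromy_transpositions, hM] at hg
    exact ⟨h.injOn, hM, mem_admissibleGluings.2 ⟨hg, hadm⟩⟩
  · rintro ⟨hv, hM, hadm⟩
    obtain ⟨hg, hadm⟩ := mem_admissibleGluings.1 hadm
    obtain ⟨h01, hend⟩ := colors_of_isCycleOn_glue hc hg.isCycleOn
    have hne : (gluingOfVertices w (vertexSeq v)).2.2.1 ≠
        (gluingOfVertices w (vertexSeq v)).2.2.2 := ne_of_apply_ne c (by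
      rcases hend with ⟨-, -, h⟩ | ⟨-, -, h⟩
      exacts [h, h.symm])
    obtain ⟨k, l, h⟩ := exists_isTraversal_transpositions (w := w) hα hv
      (ne_of_apply_ne c h01).symm fun h => hne (congrArg _ h)
    refine ⟨⟨k, l, h, ?_⟩, hM⟩
    rwa [h.turnsAtStart_iff_meetsStart, h.turnsAtEnd_iff_meetsEnd, monodromy_transpositions, hM]

theorem card_admissibleVertices (hα : Fintype.card α = d) (hd : 1 ≤ d)
    (hc : IsCycleColoring c M) (w : Perm (Fin (d + 1))) :
    #(admissibleVertices M (w 0) w) = 6 * ∏ i, #(fiber c i) := by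
  rw [← card_admissibleGluings hc ((fullTurns_lt (w := w) hd).trans_eq hα.symm)]
  refine card_nbij (fun v => gluingOfVertices w (vertexSeq v)) ?_ ?_ ?_
  · exact fun v hv => ((mem_admissibleVertices_iff hα hc).1 hv).2.2
  · intro v hv v' hv' h
    obtain ⟨hinj, hM, -⟩ := (mem_admissibleVertices_iff hα hc).1 (mem_coe.1 hv)
    obtain ⟨hinj', hM', -⟩ := (mem_admissibleVertices_iff hα hc).1 (mem_coe.1 hv')
    funext j
    rw [← vertexSeq_val v, ← vertexSeq_val v']
    exact vertices_eq_of_gluingOfVertices_eq hα hd hinj hinj' (hM.trans hM'.symm) h (by omega)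
  · rintro ⟨x, y, x', y'⟩ hq
    obtain ⟨u, hu, hgluing, hM⟩ :=
      exists_vertices_of_isGluing hα w (mem_admissibleGluings.1 (mem_coe.1 hq)).1
    have hvu (j : ℕ) (hj : j ≤ d + 1) : vertexSeq (fun j : Fin (d + 2) => u j) j = u j := by
      rw [vertexSeq, Fin.val_ofNat, Nat.mod_eq_of_lt (by omega)]
    have hg := (gluingOfVertices_congr (w := w) hd hvu).trans hgluing
    refine ⟨fun j => u j, (mem_admissibleVertices_iff hα hc).2 ⟨?_, ?_, ?_⟩, hg⟩
    · exact hu.congr fun j hj => (hvu j (by have := hj.2; omega)).symm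
    · rwa [segment_congr fun j _ hj => hvu j hj]
    · rwa [hg]

end Count

section Rotation

variable {α : Type*} {d k l : ℕ}

/-- The composite of the permutations of a family with index less than `a`, the later ones being
applied later. -/
def partialMonodromy (σ : Fin (d + 1) → Perm α) (a : Fin (d + 1)) : Perm α :=
  flow (fun t => σ (Fin.ofNat (d + 1) t)) a

theorem monodromy_eq_conj (σ : Fin (d + 1) → Perm α) (a : Fin (d + 1)) :
    monodromy σ a = partialMonodromy σ a * monodromy σ 0 * (partialMonodromy σ a)⁻¹ := by
  have hperiod : Function.Periodic (fun t => σ (Fin.ofNat (d + 1) t)) (d + 1) := fun t =>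
    congrArg σ (Fin.ext (Nat.add_mod_right t (d + 1)))
  have hshift : (fun t => σ (a + Fin.ofNat (d + 1) t)) = fun t => σ (Fin.ofNat (d + 1) (a + t)) :=
    funext fun t => by rw [ofNat_add, Fin.ofNat_val_eq_self]
  rw [eq_mul_inv_iff_mul_eq, monodromy, monodromy, partialMonodromy, hshift]
  simp only [zero_add]
  exact (flow_add _ a _).symm.trans (flow_add_period hperiod a)

theorem monodromy_conj (σ : Fin (d + 1) → Perm α) (τ : Perm α) (a : Fin (d + 1)) :
    monodromy (fun i => τ * σ i * τ⁻¹) a = τ * monodromy σ a * τ⁻¹ := flow_conj _ τ _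

theorem partialMonodromy_conj (σ : Fin (d + 1) → Perm α) (τ : Perm α) (a : Fin (d + 1)) :
    partialMonodromy (fun i => τ * σ i * τ⁻¹) a = τ * partialMonodromy σ a * τ⁻¹ :=
  flow_conj _ τ _

variable [DecidableEq α]

theorem transpositions_comp (w : Perm (Fin (d + 1))) (v : ℕ → α) (τ : Perm α) :
    transpositions w (τ ∘ v) = fun i => τ * transpositions w v i * τ⁻¹ :=
  funext fun _ => swap_apply_apply τ _ _

theorem IsTraversal.conj {σ : Fin (d + 1) → Perm α} {w : ℕ → Fin (d + 1)} {v : ℕ → α}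
    (h : IsTraversal σ d k l w v) (τ : Perm α) :
    IsTraversal (fun i => τ * σ i * τ⁻¹) d k l w (τ ∘ v) where
  __ := h
  step j hj := by rw [h.step j hj, Function.comp_apply, Function.comp_apply, swap_apply_apply]
  ne j hj := τ.injective.ne (h.ne j hj)
  vertex_inj i hi hid j hj hjd hij := h.vertex_inj i hi hid j hj hjd (τ.injective hij)
  start := congrArg τ h.start
  finish := congrArg τ h.finish

variable [Fintype α] {M : Perm α} {w : Perm (Fin (d + 1))} {v : Fin (d + 2) → α}
  {a : Fin (d + 1)}

theorem comp_mem_admissibleVertices (τ : Perm α) (hv : v ∈ admissibleVertices M a w) :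
    τ ∘ v ∈ admissibleVertices (τ * M * τ⁻¹) a w := by
  obtain ⟨htour, rfl⟩ := mem_admissibleVertices.1 hv
  obtain ⟨k, l, h, hadm⟩ := mem_tours.1 htour
  rw [mem_admissibleVertices, show vertexSeq (τ ∘ v) = τ ∘ vertexSeq v from rfl,
    transpositions_comp, monodromy_conj]
  exact ⟨mem_tours.2 ⟨k, l, h.conj τ, hadm⟩, rfl⟩

theorem card_admissibleVertices_zero (M : Perm α) (a : Fin (d + 1)) (w : Perm (Fin (d + 1))) :
    #(admissibleVertices M 0 w) = #(admissibleVertices M a w) := by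
  let B (v : Fin (d + 2) → α) : Perm α := partialMonodromy (transpositions w (vertexSeq v)) a
  have hB (τ : Perm α) (v : Fin (d + 2) → α) : B (τ ∘ v) = τ * B v * τ⁻¹ := by
    simp only [B]
    rw [show vertexSeq (τ ∘ v) = τ ∘ vertexSeq v from rfl, transpositions_comp,
      partialMonodromy_conj]
  have hrotate (v : Fin (d + 2) → α) : v ∈ admissibleVertices M a w ↔
      v ∈ admissibleVertices ((B v)⁻¹ * M * B v) 0 w := by
    rw [mem_admissibleVertices, mem_admissibleVertices, monodromy_eq_conj _ a,
      mul_inv_eq_iff_eq_mul, mul_assoc, eq_inv_mul_iff_mul_eq]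
  refine card_nbij' (fun v => ⇑(B v)⁻¹ ∘ v) (fun v => B v ∘ v) (fun v hv => ?_) (fun v hv => ?_)
    (fun v _ => ?_) (fun v _ => ?_)
  · have := comp_mem_admissibleVertices (B v)⁻¹ (mem_coe.1 hv)
    rwa [mem_coe, hrotate, hB, inv_mul_cancel, one_mul]
  · have := comp_mem_admissibleVertices (B v) ((hrotate v).1 hv)
    rwa [← mul_assoc, mul_inv_cancel_left, mul_inv_cancel_right] at this
  · simp only [hB, inv_mul_cancel, one_mul, inv_inv]
    exact funext fun j => (B v).apply_symm_apply (v j)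
  · simp only [hB, mul_inv_cancel_right]
    exact funext fun j => (B v).symm_apply_apply (v j)

end Rotation

section DoubleCount

variable {α : Type*} [DecidableEq α] {d k l : ℕ} {c : α → Fin 3} {M : Perm α}
  {σ : Fin (d + 1) → Perm α}

namespace IsTraversal

variable {w : ℕ → Fin (d + 1)} {v : ℕ → α}

theorem isSwap (h : IsTraversal σ d k l w v) (i : Fin (d + 1)) : (σ i).IsSwap := by
  obtain ⟨j, hj, rfl⟩ := h.exists_edge (Fintype.card_fin _) i
  exact ⟨_, _, h.ne j (by omega), h.step j (by omega)⟩

theorem exists_mem_closure_apply_eq (h : IsTraversal σ d k l w v) {i j : ℕ} (hij : i ≤ j)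
    (hjd : j ≤ d) : ∃ g ∈ Subgroup.closure (Set.range σ), g (v i) = v j := by
  induction j, hij using Nat.le_induction with
  | base => exact ⟨1, one_mem _, rfl⟩
  | succ j _ ih =>
    obtain ⟨g, hg, hgi⟩ := ih (by omega)
    refine ⟨σ (w j) * g, mul_mem (Subgroup.subset_closure (Set.mem_range_self _)) hg, ?_⟩
    rw [Perm.mul_apply, hgi, h.step j (by omega), swap_apply_left]

theorem isPruned [Fintype α] (h : IsTraversal σ d k l w v) (hα : Fintype.card α = d) :
    IsPruned σ where
  isSwap := h.isSwap
  connected x y := by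
    obtain ⟨i, hi, hid, rfl⟩ := exists_eq_vertex hα h.injOn x
    obtain ⟨j, hj, hjd, rfl⟩ := exists_eq_vertex hα h.injOn y
    obtain ⟨g, hg, hgi⟩ := h.exists_mem_closure_apply_eq hi hid
    obtain ⟨g', hg', hgj⟩ := h.exists_mem_closure_apply_eq hj hjd
    refine ⟨g' * g⁻¹, mul_mem hg' (inv_mem hg), ?_⟩
    rw [← hgi, ← hgj, Perm.mul_apply, Perm.inv_def, symm_apply_apply]
  two_le_degree x := by
    obtain ⟨j, hj, hjd, rfl⟩ := exists_eq_vertex hα h.injOn x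
    rw [← card_pair (h.edge_ne (i := j - 1) (j := j) (by omega) (by omega) (by omega))]
    refine card_le_card fun i hi => mem_filter_univ _ |>.2 ?_
    obtain rfl | rfl := mem_insert.1 hi |>.imp_right mem_singleton.1
    · have := h.moves_succ (j := j - 1) (by omega)
      rwa [Nat.sub_add_cancel hj] at this
    · exact h.moves hjd

end IsTraversal

variable [Fintype α]

theorem IsPruned.card_tours (hσ : IsPruned σ) (hα : Fintype.card α = d)
    (hc : IsCycleColoring c (monodromy σ 0)) : #(tours σ fun s e => e → s) = 6 := by
  obtain ⟨k, l, w, v, h⟩ := hσ.exists_traversal (by rw [Fintype.card_fin, hα])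
  rw [hα] at h
  refine card_admissible_tours h (isNoncrossing_of_monodromy hα fun a =>
    ⟨_, (monodromy_eq_conj σ a).symm ▸ hc.conj _⟩)

open scoped Classical in
/-- Both sides count the admissible tours of the families `σ` on the left. -/
theorem sum_card_tours (hα : Fintype.card α = d) (M : Perm α) :
    ∑ σ : Fin (d + 1) → Perm α with IsPruned σ ∧ monodromy σ 0 = M, #(tours σ fun s e => e → s) =
      ∑ w, #(admissibleVertices (d := d) M 0 w) := by
  rw [← card_sigma, ← card_sigma]
  refine card_nbij' (fun p => ⟨p.2.1, p.2.2⟩)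
    (fun p => ⟨transpositions p.1 (vertexSeq p.2), p.1, p.2⟩) ?_ ?_ ?_ ?_
  · rintro ⟨σ, w, v⟩ hp
    obtain ⟨hσ, htour⟩ := mem_sigma.1 hp
    obtain ⟨-, hM⟩ := (mem_filter_univ _).1 hσ
    obtain ⟨k, l, h, -⟩ := mem_tours.1 htour
    rw [mem_coe, mem_sigma, mem_admissibleVertices, ← h.eq_transpositions]
    exact ⟨mem_univ w, htour, hM⟩
  · rintro ⟨w, v⟩ hp
    obtain ⟨htour, hM⟩ := mem_admissibleVertices.1 (mem_sigma.1 hp).2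
    obtain ⟨k, l, h, -⟩ := mem_tours.1 htour
    exact mem_sigma.2 ⟨(mem_filter_univ _).2 ⟨h.isPruned hα, hM⟩, htour⟩
  · rintro ⟨σ, w, v⟩ hp
    obtain ⟨k, l, h, -⟩ := mem_tours.1 (mem_sigma.1 hp).2
    exact congrArg (Sigma.mk · (w, v)) h.eq_transpositions.symm
  · exact fun p _ => rfl

open scoped Classical in
theorem card_isPruned_monodromy (hα : Fintype.card α = d) (hd : 1 ≤ d)
    (hc : IsCycleColoring c M) :
    #{σ : Fin (d + 1) → Perm α | IsPruned σ ∧ monodromy σ 0 = M} =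
      (d + 1).factorial * ∏ i, #(fiber c i) := by
  have hcount := sum_card_tours hα M
  have hsix (σ : Fin (d + 1) → Perm α)
      (hσ : σ ∈ ({σ | IsPruned σ ∧ monodromy σ 0 = M} : Finset (Fin (d + 1) → Perm α))) :
      #(tours σ fun s e => e → s) = 6 := by
    obtain ⟨hpruned, hM⟩ := (mem_filter_univ σ).1 hσ
    exact hpruned.card_tours hα (hM ▸ hc)
  have hvertices (w : Perm (Fin (d + 1))) :
      #(admissibleVertices M 0 w) = 6 * ∏ i, #(fiber c i) :=
    (card_admissibleVertices_zero M (w 0) w).trans (card_admissibleVertices hα hd hc w)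
  rw [sum_const_nat hsix, sum_const_nat fun w _ => hvertices w, card_univ, Fintype.card_perm,
    Fintype.card_fin, mul_left_comm, mul_comm] at hcount
  exact Nat.eq_of_mul_eq_mul_left (by norm_num) hcount

end DoubleCount

section CycleType

variable {κ : Type*} {β : κ → Type*}

theorem sigmaCongrRight_mulSingle [DecidableEq κ] (i : κ) (f : Perm (β i)) :
    Perm.sigmaCongrRight (Pi.mulSingle i f) = f.extendDomain (sigmaSubtype i).symm := by
  ext1 ⟨j, b⟩
  obtain rfl | hj := eq_or_ne j i
  · refine (congrArg (Sigma.mk j) ?_).trans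
      (f.extendDomain_apply_image (sigmaSubtype j).symm b).symm
    rw [Pi.mulSingle_eq_same]
  · rw [f.extendDomain_apply_not_subtype (sigmaSubtype i).symm (b := ⟨j, b⟩) hj]
    refine congrArg (Sigma.mk j) ?_
    rw [Pi.mulSingle_eq_of_ne hj, Perm.one_apply]

theorem cycleType_sigmaCongrRight [Fintype κ] [DecidableEq κ] [∀ i, Fintype (β i)]
    [∀ i, DecidableEq (β i)] (f : ∀ i, Perm (β i)) :
    (Perm.sigmaCongrRight f).cycleType = ∑ i, (f i).cycleType := by
  have hdisj : (SetLike.coe (univ : Finset κ)).Pairwise fun i j => Perm.Disjoint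
      (Perm.sigmaCongrRightHom β (Pi.mulSingle i (f i)))
      (Perm.sigmaCongrRightHom β (Pi.mulSingle j (f j))) := by
    rintro i - j - hij ⟨k, b⟩
    rw [Perm.sigmaCongrRightHom_apply, Perm.sigmaCongrRightHom_apply, sigmaCongrRight_mulSingle,
      sigmaCongrRight_mulSingle]
    by_cases hk : k = i
    · exact Or.inr (Perm.extendDomain_apply_not_subtype _ _ fun h => hij (hk.symm.trans h))
    · exact Or.inl (Perm.extendDomain_apply_not_subtype _ _ hk)
  have hprod := (univ.map_noncommProd _ _ (Perm.sigmaCongrRightHom β)).symm.trans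
    (congrArg _ (noncommProd_mulSingle f))
  rw [← Perm.sigmaCongrRightHom_apply, ← hprod, Perm.Disjoint.cycleType_noncommProd hdisj]
  refine sum_congr rfl fun i _ => ?_
  rw [Perm.sigmaCongrRightHom_apply, sigmaCongrRight_mulSingle, Perm.cycleType_extendDomain]

theorem isCycleOn_sigmaCongrRight {f : ∀ i, Perm (β i)} {i : κ} (h : (f i).IsCycleOn Set.univ) :
    (Perm.sigmaCongrRight f).IsCycleOn (Sigma.fst ⁻¹' {i}) := by
  refine ⟨Equiv.bijOn _ fun _ => Iff.rfl, ?_⟩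
  rintro ⟨j, a⟩ (rfl : j = i) ⟨k, b⟩ (rfl : k = j)
  obtain ⟨n, rfl⟩ := h.2 (Set.mem_univ a) (Set.mem_univ b)
  exact ⟨n, by rw [← Perm.sigmaCongrRightHom_apply, ← map_zpow]; rfl⟩

theorem cycleType_finRotate_eq_filter (n : ℕ) :
    (finRotate n).cycleType = Multiset.filter (2 ≤ ·) {n} := by
  obtain hn | hn := le_or_gt 2 n
  · rw [cycleType_finRotate_of_le hn, Multiset.filter_singleton, if_pos hn]
  · have : Subsingleton (Fin n) := Fin.subsingleton_iff_le_one.2 (Nat.le_of_lt_succ hn)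
    rw [Multiset.filter_singleton, if_neg hn.not_ge, Subsingleton.elim (finRotate n) 1,
      Perm.cycleType_one, Multiset.empty_eq_zero]

theorem isCycleOn_finRotate (n : ℕ) : (finRotate n).IsCycleOn Set.univ := by
  obtain hn | hn := le_or_gt 2 n
  · convert! (isCycle_finRotate_of_le hn).isCycleOn
    rw [← Perm.coe_support_eq_set_support, support_finRotate_of_le hn, coe_univ]
  · have : Subsingleton (Fin n) := Fin.subsingleton_iff_le_one.2 (Nat.le_of_lt_succ hn)
    exact Perm.isCycleOn_of_subsingleton _ _

end CycleType

section Coloring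

variable {α κ : Type*} [Fintype α] [DecidableEq κ] {μ : κ → ℕ}

theorem card_fiber_fst_comp (e : (Σ i, Fin (μ i)) ≃ α) (i : κ) :
    #(fiber (Sigma.fst ∘ e.symm) i) = μ i := by
  suffices h : fiber (Sigma.fst ∘ e.symm) i =
      univ.map ((Function.Embedding.sigmaMk i).trans e.toEmbedding) by rw [h, card_map, card_fin]
  ext a
  obtain ⟨⟨j, x⟩, rfl⟩ := e.surjective a
  rw [mem_fiber, Function.comp_apply, symm_apply_apply, mem_map]
  constructor
  · rintro rfl
    exact ⟨x, mem_univ x, rfl⟩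
  · rintro ⟨y, -, h⟩
    exact (congrArg Sigma.fst (e.injective h)).symm

theorem exists_isCycleColoring [Fintype κ] [DecidableEq α] {M : Perm α} (hμ : ∀ i, 1 ≤ μ i)
    (hα : Fintype.card α = ∑ i, μ i)
    (hM : M.cycleType = ∑ i, Multiset.filter (2 ≤ ·) {μ i}) :
    ∃ c : α → κ, IsCycleColoring c M ∧ ∀ i, #(fiber c i) = μ i := by
  obtain ⟨e⟩ : Nonempty ((Σ i, Fin (μ i)) ≃ α) := Fintype.card_eq.1 <| by
    rw [Fintype.card_sigma, hα]
    exact sum_congr rfl fun i _ => Fintype.card_fin _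
  let f : (Σ i, Fin (μ i)) ≃ {_a : α // True} := e.trans (subtypeUnivEquiv fun _ => trivial).symm
  let R : Perm (Σ i, Fin (μ i)) := Perm.sigmaCongrRight fun i => finRotate (μ i)
  have hR : (R.extendDomain f).cycleType = M.cycleType := by
    rw [Perm.cycleType_extendDomain, cycleType_sigmaCongrRight, hM]
    exact sum_congr rfl fun i _ => cycleType_finRotate_eq_filter _
  obtain ⟨g, rfl⟩ := isConj_iff.1 (Perm.isConj_iff_cycleType_eq.2 hR)
  have hc : IsCycleColoring (Sigma.fst ∘ e.symm) (R.extendDomain f) := by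
    refine ⟨fun i => ⟨e ⟨i, 0, hμ i⟩, ?_⟩, fun i => ?_⟩
    · rw [Function.comp_apply, symm_apply_apply]
    · convert! (isCycleOn_sigmaCongrRight (f := fun i => finRotate (μ i)) (i := i)
        (isCycleOn_finRotate (μ i))).extendDomain f
      ext
      rw [mem_coe, mem_fiber, show Subtype.val ∘ f = e from rfl, Equiv.image_eq_preimage_symm]
      rfl
  refine ⟨_, hc.conj g, fun i => ?_⟩
  exact card_fiber_fst_comp (e.trans g) i

end Coloring

section Product

variable {α : Type*} [DecidableEq α]

theorem flow_eq_inv_prod {f : ℕ → Perm α} {n : ℕ} (hf : ∀ i < n, (f i).IsSwap) :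
    flow f n = ((List.ofFn fun i : Fin n => f i).prod)⁻¹ := by
  induction n with
  | zero => rw [flow, List.ofFn_zero, List.prod_nil, inv_one]
  | succ n ih =>
    obtain ⟨x, y, -, hxy⟩ := hf n n.lt_succ_self
    rw [flow, ih fun i hi => hf i (by omega), List.ofFn_succ', List.concat_eq_append,
      List.prod_append, List.prod_singleton, mul_inv_rev, Fin.val_last, hxy, swap_inv]
    rfl

theorem monodromy_zero_eq_inv_prod {d : ℕ} {σ : Fin (d + 1) → Perm α} (hσ : ∀ i, (σ i).IsSwap) :
    monodromy σ 0 = ((List.ofFn σ).prod)⁻¹ := by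
  rw [monodromy, flow_eq_inv_prod fun i _ => hσ _]
  simp only [zero_add, Fin.ofNat_val_eq_self]

theorem isPrunedFactorisation_iff {d m : ℕ} {T : Perm (Fin d)} {σ : Fin (m + 1) → Perm (Fin d)} :
    IsPrunedFactorisation T σ ↔ IsPruned σ ∧ monodromy σ 0 = T⁻¹ := by
  have hdeg (x : Fin d) : Nat.card {i // σ i x ≠ x} = #{i | σ i x ≠ x} := by
    rw [Nat.card_eq_fintype_card, Fintype.card_subtype]
  simp only [IsPrunedFactorisation, hdeg]
  constructor
  · rintro ⟨hswap, hprod, hconn, hdeg⟩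
    exact ⟨⟨hswap, hconn, hdeg⟩, by rw [monodromy_zero_eq_inv_prod hswap, hprod]⟩
  · rintro ⟨hσ, hT⟩
    rw [monodromy_zero_eq_inv_prod hσ.isSwap, inv_inj] at hT
    exact ⟨hσ.isSwap, hT, hσ.connected, hσ.two_le_degree⟩

end Product

end PrunedHurwitz

/-- Pruned simple Hurwitz number `K_{0,3}(μ₁, μ₂, μ₃) = (μ₁+μ₂+μ₃+1)! · μ₁μ₂μ₃`:
here `T` is a fixed permutation of `{1, …, μ₁+μ₂+μ₃}` of cycle type `(μ₁, μ₂, μ₃)` and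
the factorisations are into `m = 2·0 - 2 + 3 + (μ₁+μ₂+μ₃) = μ₁+μ₂+μ₃+1` transpositions
generating a transitive subgroup, with every point moved by at least two of the
transpositions. -/
theorem prunedHurwitz_genus_zero_three_part (μ₁ μ₂ μ₃ : ℕ)
    (h₁ : 1 ≤ μ₁) (h₂ : 1 ≤ μ₂) (h₃ : 1 ≤ μ₃)
    (T : Equiv.Perm (Fin (μ₁ + μ₂ + μ₃)))
    (hT : T.cycleType = Multiset.filter (fun x => 2 ≤ x) ({μ₁, μ₂, μ₃} : Multiset ℕ)) :
    Nat.card {σ : Fin (μ₁ + μ₂ + μ₃ + 1) → Equiv.Perm (Fin (μ₁ + μ₂ + μ₃)) //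
        IsPrunedFactorisation T σ}
      = Nat.factorial (μ₁ + μ₂ + μ₃ + 1) * (μ₁ * μ₂ * μ₃) := by
  classical
  obtain ⟨c, hc, hcard⟩ := PrunedHurwitz.exists_isCycleColoring (μ := ![μ₁, μ₂, μ₃]) (M := T⁻¹)
    (Fin.forall_fin_succ.2 ⟨h₁, Fin.forall_fin_two.2 ⟨h₂, h₃⟩⟩)
    (by rw [Fintype.card_fin, Fin.sum_univ_three]; rfl)
    (by
      rw [Equiv.Perm.cycleType_inv, hT, Fin.sum_univ_three, ← Multiset.filter_add,
        ← Multiset.filter_add]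
      rfl)
  have hcount := PrunedHurwitz.card_isPruned_monodromy (Fintype.card_fin _) (by omega) hc
  rw [Fin.prod_univ_three, hcard, hcard, hcard] at hcount
  rw [Nat.card_congr (Equiv.subtypeEquivRight fun _ => PrunedHurwitz.isPrunedFactorisation_iff),
    Nat.card_eq_fintype_card, Fintype.card_subtype, hcount]
  rfl
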